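/- arXiv:2601.12059 — 10 statements merged into one kernel-verified Lean document; each statement's English description precedes it below -/
import Mathlib

section
/- Let E be an injective cogenerator for R-modules. Then an R-module T is almost zero if and only if the R-module Hom_R(T, E) is almost zero. -/
universe u

/-- For an injective cogenerator `E`, a module `T` is almost zero
iff `Hom_R(T, E)` is almost zero. -/
theorem almostZero_iff_hom_almostZero
    {R : Type u} [CommRing R] (m : Ideal R) (hm : m * m = m)
    (E : Type u) [AddCommGroup E] [Module R E]
    (hEinj : Module.Injective R E)
    (hEcogen : ∀ (T : Type u) [AddCommGroup T] [Module R T],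
      (∀ φ : T →ₗ[R] E, φ = 0) → Subsingleton T)
    (T : Type u) [AddCommGroup T] [Module R T] :
    (∀ s ∈ m, ∀ x : T, s • x = 0) ↔ (∀ s ∈ m, ∀ φ : T →ₗ[R] E, s • φ = 0) := by
  constructor
  · intro h s hs φ
    ext x
    rw [LinearMap.smul_apply, ← map_smul, h s hs x, map_zero, LinearMap.zero_apply]
  · intro h s hs x
    have hsub : Subsingleton (LinearMap.range (LinearMap.lsmul R T s)) := by
      apply hEcogen
      intro φ
      obtain ⟨ψ, hψ⟩ := hEinj.out (LinearMap.range (LinearMap.lsmul R T s)).subtype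
        (Submodule.subtype_injective _) φ
      ext ⟨y, z, rfl⟩
      rw [← hψ]
      have h1 := LinearMap.congr_fun (h s hs ψ) z
      simpa using h1
    have h2 := hsub.elim ⟨s • x, x, rfl⟩ 0
    exact congrArg Subtype.val h2
end

section
/- (Almost five lemma.) Consider a commutative diagram of R-modules with exact rows A → B → C → D → E and A' → B' → C' → D' → E', with vertical maps f_A, f_B, f_C, f_D, f_E. Then: (1) if f_B and f_D are almost injections and f_A is an almost surjection, then f_C is an almost injection; (2) if f_B and f_D are almost surjections and f_E is an almost injection, then f_C is an almost surjection; (3) consequently, if f_A is an almost surjection, f_E is an almost injection, and f_B and f_D are almost isomorphisms, then f_C is an almost isomorphism. -/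
universe u

/-- If `m * m = m`, it suffices to test almost membership on triple products. -/
theorem almost_mem_of_triple {R M : Type*} [CommRing R] (m : Ideal R) (hm : m * m = m)
    [AddCommGroup M] [Module R M] (N : Submodule R M) (x : M)
    (h : ∀ a ∈ m, ∀ b ∈ m, ∀ c ∈ m, a • b • c • x ∈ N) : ∀ s ∈ m, s • x ∈ N := by
  have key : ∀ z : M, (∀ a ∈ m, ∀ b ∈ m, a • b • z ∈ N) → ∀ s ∈ m, s • z ∈ N := by
    intro z hz s hs
    rw [← hm] at hs
    refine Submodule.mul_induction_on hs ?_ ?_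
    · intro a ha b hb
      rw [mul_smul]
      exact hz a ha b hb
    · intro a b ha hb
      rw [add_smul]
      exact N.add_mem ha hb
  exact key x fun a ha c hc => key (c • x) (fun a ha b hb => h a ha b hb c hc) a ha

/-- The almost five lemma. -/
theorem almost_five_lemma
    {R : Type u} [CommRing R] (m : Ideal R) (hm : m * m = m)
    {A B C D E A' B' C' D' E' : Type u}
    [AddCommGroup A] [Module R A] [AddCommGroup B] [Module R B] [AddCommGroup C] [Module R C]
    [AddCommGroup D] [Module R D] [AddCommGroup E] [Module R E]
    [AddCommGroup A'] [Module R A'] [AddCommGroup B'] [Module R B'] [AddCommGroup C'] [Module R C']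
    [AddCommGroup D'] [Module R D'] [AddCommGroup E'] [Module R E']
    (g₁ : A →ₗ[R] B) (g₂ : B →ₗ[R] C) (g₃ : C →ₗ[R] D) (g₄ : D →ₗ[R] E)
    (h₁ : A' →ₗ[R] B') (h₂ : B' →ₗ[R] C') (h₃ : C' →ₗ[R] D') (h₄ : D' →ₗ[R] E')
    (fA : A →ₗ[R] A') (fB : B →ₗ[R] B') (fC : C →ₗ[R] C') (fD : D →ₗ[R] D') (fE : E →ₗ[R] E')
    (hrow₁B : Function.Exact g₁ g₂) (hrow₁C : Function.Exact g₂ g₃)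
    (hrow₁D : Function.Exact g₃ g₄)
    (hrow₂B : Function.Exact h₁ h₂) (hrow₂C : Function.Exact h₂ h₃)
    (hrow₂D : Function.Exact h₃ h₄)
    (hc₁ : fB ∘ₗ g₁ = h₁ ∘ₗ fA) (hc₂ : fC ∘ₗ g₂ = h₂ ∘ₗ fB)
    (hc₃ : fD ∘ₗ g₃ = h₃ ∘ₗ fC) (hc₄ : fE ∘ₗ g₄ = h₄ ∘ₗ fD) :
    -- (1)
    (((∀ s ∈ m, ∀ x ∈ LinearMap.ker fB, s • x = 0) →
        (∀ s ∈ m, ∀ x ∈ LinearMap.ker fD, s • x = 0) →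
        (∀ s ∈ m, ∀ y : A', s • y ∈ LinearMap.range fA) →
        ∀ s ∈ m, ∀ x ∈ LinearMap.ker fC, s • x = 0) ∧
    -- (2)
    ((∀ s ∈ m, ∀ y : B', s • y ∈ LinearMap.range fB) →
        (∀ s ∈ m, ∀ y : D', s • y ∈ LinearMap.range fD) →
        (∀ s ∈ m, ∀ x ∈ LinearMap.ker fE, s • x = 0) →
        ∀ s ∈ m, ∀ y : C', s • y ∈ LinearMap.range fC) ∧
    -- (3)
    ((∀ s ∈ m, ∀ y : A', s • y ∈ LinearMap.range fA) →
        (∀ s ∈ m, ∀ x ∈ LinearMap.ker fE, s • x = 0) →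
        ((∀ s ∈ m, ∀ x ∈ LinearMap.ker fB, s • x = 0) ∧
          (∀ s ∈ m, ∀ y : B', s • y ∈ LinearMap.range fB)) →
        ((∀ s ∈ m, ∀ x ∈ LinearMap.ker fD, s • x = 0) ∧
          (∀ s ∈ m, ∀ y : D', s • y ∈ LinearMap.range fD)) →
        ((∀ s ∈ m, ∀ x ∈ LinearMap.ker fC, s • x = 0) ∧
          (∀ s ∈ m, ∀ y : C', s • y ∈ LinearMap.range fC)))) := by
  have e₁ : ∀ x, fB (g₁ x) = h₁ (fA x) := fun x => LinearMap.congr_fun hc₁ x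
  have e₂ : ∀ x, fC (g₂ x) = h₂ (fB x) := fun x => LinearMap.congr_fun hc₂ x
  have e₃ : ∀ x, fD (g₃ x) = h₃ (fC x) := fun x => LinearMap.congr_fun hc₃ x
  have e₄ : ∀ x, fE (g₄ x) = h₄ (fD x) := fun x => LinearMap.congr_fun hc₄ x
  have part1 : (∀ s ∈ m, ∀ x ∈ LinearMap.ker fB, s • x = 0) →
        (∀ s ∈ m, ∀ x ∈ LinearMap.ker fD, s • x = 0) →
        (∀ s ∈ m, ∀ y : A', s • y ∈ LinearMap.range fA) →
        ∀ s ∈ m, ∀ x ∈ LinearMap.ker fC, s • x = 0 := by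
    intro iB iD sA s hs x hx
    rw [LinearMap.mem_ker] at hx
    rw [← Submodule.mem_bot R]
    refine almost_mem_of_triple m hm ⊥ x ?_ s hs
    intro a ha b hb c hc
    rw [Submodule.mem_bot]
    have h1 : c • g₃ x = 0 := iD c hc _ (by rw [LinearMap.mem_ker, e₃, hx, map_zero])
    obtain ⟨β, hβ⟩ := (hrow₁C (c • x)).1 (by rw [map_smul, h1])
    obtain ⟨α', hα'⟩ := (hrow₂B (fB β)).1 (by rw [← e₂, hβ, map_smul, hx, smul_zero])
    obtain ⟨α, hα⟩ := sA b hb α'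
    have h2 : a • (b • β - g₁ α) = 0 := iB a ha _ (by
      rw [LinearMap.mem_ker, map_sub, map_smul, e₁, hα, map_smul, hα', sub_self])
    have h3 := congrArg g₂ h2
    rwa [map_smul, map_sub, hrow₁B.apply_apply_eq_zero, sub_zero, map_smul, hβ, map_zero] at h3
  have part2 : (∀ s ∈ m, ∀ y : B', s • y ∈ LinearMap.range fB) →
        (∀ s ∈ m, ∀ y : D', s • y ∈ LinearMap.range fD) →
        (∀ s ∈ m, ∀ x ∈ LinearMap.ker fE, s • x = 0) →
        ∀ s ∈ m, ∀ y : C', s • y ∈ LinearMap.range fC := by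
    intro sB sD iE s hs y
    refine almost_mem_of_triple m hm _ y ?_ s hs
    intro a ha b hb c hc
    obtain ⟨d, hd⟩ := sD c hc (h₃ y)
    have h1 : b • g₄ d = 0 := iE b hb _ (by
      rw [LinearMap.mem_ker, e₄, hd, map_smul, hrow₂D.apply_apply_eq_zero, smul_zero])
    obtain ⟨x, hx⟩ := (hrow₁D (b • d)).1 (by rw [map_smul, h1])
    obtain ⟨β', hβ'⟩ := (hrow₂C (b • c • y - fC x)).1 (by
      rw [map_sub, ← e₃, hx, map_smul, map_smul, map_smul, hd, sub_self])
    obtain ⟨β, hβ⟩ := sB a ha β'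
    refine ⟨g₂ β + a • x, ?_⟩
    rw [map_add, e₂, hβ, map_smul, map_smul, hβ', smul_sub, sub_add_cancel]
  exact ⟨part1, part2, fun sA iE hB hD => ⟨part1 hB.1 hD.1 sA, part2 hB.2 hD.2 iE⟩⟩
end

section
/- The ring R is almost coherent (i.e., every almost finitely generated ideal of R is almost finitely presented) if and only if every finitely generated ideal of R is almost finitely presented. -/
universe u

/-- A module `M` is almost finitely generated (relative to the ideal `m`):
for every `s ∈ m` there are `n` and `f : Rⁿ →ₗ M` with `s • coker f = 0`. -/
def IsAlmostFG {R : Type u} [CommRing R] (m : Ideal R)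
    (M : Type u) [AddCommGroup M] [Module R M] : Prop :=
  ∀ s ∈ m, ∃ (n : ℕ) (f : (Fin n → R) →ₗ[R] M), ∀ y : M, s • y ∈ LinearMap.range f

/-- A module `M` is almost finitely presented (relative to the ideal `m`):
for all `s, t ∈ m` there are `n, k` and maps `g : Rᵏ →ₗ Rⁿ`, `f : Rⁿ →ₗ M` with
`f ∘ g = 0`, `s • coker f = 0` and `t • ker f ⊆ im g`. -/
def IsAlmostFP {R : Type u} [CommRing R] (m : Ideal R)
    (M : Type u) [AddCommGroup M] [Module R M] : Prop :=
  ∀ s ∈ m, ∀ t ∈ m, ∃ (n k : ℕ) (g : (Fin k → R) →ₗ[R] (Fin n → R))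
    (f : (Fin n → R) →ₗ[R] M),
      f ∘ₗ g = 0 ∧ (∀ y : M, s • y ∈ LinearMap.range f) ∧
        (∀ x ∈ LinearMap.ker f, t • x ∈ LinearMap.range g)

theorem aux_ker_fg {R : Type u} [CommRing R] (m : Ideal R) (hm : m * m = m)
    (M : Type u) [AddCommGroup M] [Module R M] (hM : IsAlmostFP m M)
    (n : ℕ) (p : (Fin n → R) →ₗ[R] M) (hp : Function.Surjective p) (t : R) (ht : t ∈ m) :
    ∃ N : Submodule R (Fin n → R), N.FG ∧ N ≤ LinearMap.ker p ∧
      ∀ x ∈ LinearMap.ker p, t • x ∈ N := by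
  rw [← hm] at ht
  induction ht using Submodule.mul_induction_on' with
  | mem_mul_mem a ha b hb =>
    obtain ⟨n', k, g, F, hFg, hs, hk⟩ := hM a ha b hb
    obtain ⟨α, hα⟩ := Module.projective_lifting_property p F hp
    let ap : (Fin n → R) →ₗ[R] LinearMap.range F := (a • p).codRestrict _ (fun x => hs (p x))
    obtain ⟨β, hβ⟩ := Module.projective_lifting_property F.rangeRestrict ap
      F.surjective_rangeRestrict
    have hα' : ∀ x, p (α x) = F x := fun x => LinearMap.congr_fun hα x
    have hβ' : ∀ x, F (β x) = a • p x := fun x =>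
      congrArg Subtype.val (LinearMap.congr_fun hβ x)
    have hFg' : ∀ x, F (g x) = 0 := fun x => LinearMap.congr_fun hFg x
    refine ⟨LinearMap.range (α ∘ₗ g) ⊔ LinearMap.range (α ∘ₗ β - a • LinearMap.id), ?_, ?_, ?_⟩
    · exact Submodule.FG.sup (Module.Finite.iff_fg.1 inferInstance)
        (Module.Finite.iff_fg.1 inferInstance)
    · refine sup_le ?_ ?_
      · rintro _ ⟨x, rfl⟩
        simp [hα', hFg']
      · rintro _ ⟨x, rfl⟩
        simp [hα', hβ']
    · intro x hx
      have hx' : p x = 0 := hx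
      obtain ⟨y, hy⟩ := hk (β x) (by simp [hβ', hx'])
      refine Submodule.mem_sup.2 ⟨α (g y), ⟨y, rfl⟩,
        (α ∘ₗ β - a • LinearMap.id : (Fin n → R) →ₗ[R] (Fin n → R)) (-(b • x)), ⟨_, rfl⟩, ?_⟩
      rw [hy]
      simp [smul_smul]
  | add a _ b _ h1 h2 =>
    obtain ⟨N1, f1, l1, k1⟩ := h1
    obtain ⟨N2, f2, l2, k2⟩ := h2
    refine ⟨N1 ⊔ N2, f1.sup f2, sup_le l1 l2, fun x hx => ?_⟩
    rw [add_smul]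
    exact Submodule.add_mem_sup (k1 x hx) (k2 x hx)

/-- `R` is almost coherent iff every finitely generated ideal of `R`
is almost finitely presented. -/
theorem almostCoherent_iff_fg_ideal_almostFP
    {R : Type u} [CommRing R] (m : Ideal R) (hm : m * m = m) :
    (∀ I : Ideal R, IsAlmostFG m I → IsAlmostFP m I) ↔
      (∀ I : Ideal R, I.FG → IsAlmostFP m I) := by
  constructor
  · intro h I hI
    refine h I fun s _ => ?_
    have : Module.Finite R I := Module.Finite.iff_fg.2 hI
    obtain ⟨n, f, hf⟩ := Module.Finite.exists_fin' R I
    exact ⟨n, f, fun y => hf _⟩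
  · intro h I hI s hs t ht
    obtain ⟨n, f, hf⟩ := hI s hs
    let q : (Fin n → R) →ₗ[R] R := I.subtype ∘ₗ f
    obtain ⟨N, hN, hle, hk⟩ := aux_ker_fg m hm (LinearMap.range q)
      (h (LinearMap.range q) (Module.Finite.iff_fg.1 inferInstance)) n q.rangeRestrict
      q.surjective_rangeRestrict t ht
    have hker : LinearMap.ker q.rangeRestrict = LinearMap.ker f := by
      ext x
      simp [q]
    rw [hker] at hle hk
    have : Module.Finite R N := Module.Finite.iff_fg.2 hN
    obtain ⟨k, g, hg⟩ := Module.Finite.exists_fin' R N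
    refine ⟨n, k, N.subtype ∘ₗ g, f, ?_, hf, fun x hx => ?_⟩
    · exact LinearMap.ext fun x => hle (g x).2
    · obtain ⟨y, hy⟩ := hg ⟨_, hk x hx⟩
      exact ⟨y, by simp [hy]⟩
end

section
/- Let 0 → A →f B →g C → 0 be a short exact sequence of R-modules. Then the following are equivalent: (1) the sequence is almost pure; (2) for every finitely presented R-module M, the kernel of the induced map M ⊗_R A → M ⊗_R B is almost zero; (3) for every finitely presented R-module N, every R-linear map γ : N → C, and every s ∈ m, there exists an R-linear map δ : N → B with g ∘ δ = s·γ. -/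
universe u

/-- A short exact sequence `0 → A →f B → C → 0` is almost pure if for every module `M`
the kernel of `M ⊗ A → M ⊗ B` is almost zero. -/
def IsAlmostPure {R : Type u} [CommRing R] (m : Ideal R)
    {A B : Type u} [AddCommGroup A] [Module R A] [AddCommGroup B] [Module R B]
    (f : A →ₗ[R] B) : Prop :=
  ∀ (M : Type u) [AddCommGroup M] [Module R M],
    ∀ s ∈ m, ∀ x ∈ LinearMap.ker (LinearMap.lTensor M f), s • x = 0

open TensorProduct in
theorem aux_exists_sum {R : Type u} [CommRing R] {M A : Type u} [AddCommGroup M] [Module R M]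
    [AddCommGroup A] [Module R A] {n : ℕ} (v : Fin n → M)
    (hv : Submodule.span R (Set.range v) = ⊤) (x : M ⊗[R] A) :
    ∃ a : Fin n → A, x = ∑ i, v i ⊗ₜ[R] a i := by
  induction x with
  | zero => exact ⟨0, by simp⟩
  | tmul y z =>
    have hy : y ∈ Submodule.span R (Set.range v) := hv ▸ Submodule.mem_top
    obtain ⟨c, rfl⟩ := (Submodule.mem_span_range_iff_exists_fun R).1 hy
    refine ⟨fun i => c i • z, ?_⟩
    simp [TensorProduct.sum_tmul, TensorProduct.smul_tmul]
  | add x y hx hy =>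
    obtain ⟨a, rfl⟩ := hx
    obtain ⟨b, rfl⟩ := hy
    exact ⟨a + b, by simp [TensorProduct.tmul_add, Finset.sum_add_distrib]⟩

/-- Finitely generated case of (3) implies (1). -/
theorem aux_fg {R : Type u} [CommRing R] (s : R)
    {A B C : Type u} [AddCommGroup A] [Module R A] [AddCommGroup B] [Module R B]
    [AddCommGroup C] [Module R C]
    (f : A →ₗ[R] B) (g : B →ₗ[R] C)
    (hf : Function.Injective f)
    (hfg : LinearMap.range f = LinearMap.ker g)
    (H : ∀ (N : Type u) [AddCommGroup N] [Module R N], Module.FinitePresentation R N →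
        ∀ γ : N →ₗ[R] C, ∃ δ : N →ₗ[R] B, g ∘ₗ δ = s • γ)
    (M : Type u) [AddCommGroup M] [Module R M] [Module.Finite R M]
    (x : TensorProduct R M A) (hx : LinearMap.lTensor M f x = 0) : s • x = 0 := by
  obtain ⟨n, v, hv⟩ := Module.Finite.exists_fin (R := R) (M := M)
  obtain ⟨a, rfl⟩ := aux_exists_sum v hv x
  simp only [map_sum, LinearMap.lTensor_tmul] at hx
  obtain ⟨k, c, b, h1, h2⟩ := TensorProduct.vanishesTrivially_of_sum_tmul_eq_zero R hv hx
  have hgf : ∀ y, g (f y) = 0 := fun y => by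
    have : f y ∈ LinearMap.ker g := hfg ▸ LinearMap.mem_range_self f y
    exact this
  let K : Submodule R (Fin k → R) := Submodule.span R (Set.range c)
  have hK : K.FG := Submodule.fg_span (Set.finite_range c)
  have hN : Module.FinitePresentation R ((Fin k → R) ⧸ K) :=
    Module.finitePresentation_of_surjective K.mkQ K.mkQ_surjective (by simpa using hK)
  let β : (Fin k → R) →ₗ[R] B := Fintype.linearCombination R b
  have hβ : ∀ i, β (c i) = f (a i) := fun i => by
    simp [β, Fintype.linearCombination_apply, h1 i]
  have hle : K ≤ LinearMap.ker (g ∘ₗ β) := by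
    rw [Submodule.span_le]
    rintro _ ⟨i, rfl⟩
    simp [hβ, hgf]
  obtain ⟨δ, hδ⟩ := H _ hN (K.liftQ (g ∘ₗ β) hle)
  have hσ : ∀ w : Fin k → R, ∃ y, f y = s • β w - δ (K.mkQ w) := fun w => by
    have : s • β w - δ (K.mkQ w) ∈ LinearMap.range f := by
      rw [hfg, LinearMap.mem_ker, map_sub, map_smul]
      have := LinearMap.congr_fun hδ (K.mkQ w)
      simp only [LinearMap.comp_apply, LinearMap.smul_apply] at this
      rw [this]
      simp
    exact this
  choose σ hσ using hσ
  rw [Finset.smul_sum]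
  simp_rw [← TensorProduct.tmul_smul]
  apply TensorProduct.sum_tmul_eq_zero_of_vanishesTrivially
  refine ⟨k, c, fun j => σ (Pi.single j 1), fun i => hf ?_, h2⟩
  have hc : c i = ∑ j, c i j • (Pi.single j (1 : R) : Fin k → R) := by
    ext l; simp [Finset.sum_apply, Pi.single_apply]
  have h0 : K.mkQ (c i) = 0 := by
    simpa using Submodule.subset_span (Set.mem_range_self i)
  have h3 : s • β (c i) - δ (K.mkQ (c i))
      = ∑ j, c i j • (s • β (Pi.single j 1) - δ (K.mkQ (Pi.single j 1))) := by
    have := map_sum (s • β - δ ∘ₗ K.mkQ)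
      (fun j => c i j • (Pi.single j (1 : R) : Fin k → R)) Finset.univ
    rw [← hc] at this
    simpa only [map_smul, LinearMap.sub_apply, LinearMap.smul_apply, LinearMap.comp_apply]
      using this
  rw [h0, map_zero, sub_zero, hβ] at h3
  simp only [map_sum, map_smul, hσ]
  exact h3

theorem aux_31 {R : Type u} [CommRing R] (s : R)
    {A B C : Type u} [AddCommGroup A] [Module R A] [AddCommGroup B] [Module R B]
    [AddCommGroup C] [Module R C]
    (f : A →ₗ[R] B) (g : B →ₗ[R] C)
    (hf : Function.Injective f)
    (hfg : LinearMap.range f = LinearMap.ker g)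
    (H : ∀ (N : Type u) [AddCommGroup N] [Module R N], Module.FinitePresentation R N →
        ∀ γ : N →ₗ[R] C, ∃ δ : N →ₗ[R] B, g ∘ₗ δ = s • γ)
    (M : Type u) [AddCommGroup M] [Module R M]
    (x : TensorProduct R M A) (hx : LinearMap.lTensor M f x = 0) : s • x = 0 := by
  obtain ⟨P, hP, t, rfl⟩ := TensorProduct.exists_of_fg x
  have e1 : LinearMap.rTensor B P.subtype (LinearMap.lTensor P f t) = 0 := by
    rw [← hx, ← LinearMap.comp_apply, ← LinearMap.comp_apply,
      LinearMap.rTensor_comp_lTensor, LinearMap.lTensor_comp_rTensor]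
  obtain ⟨Q, hPQ, hQ, e2⟩ := TensorProduct.eq_zero_of_fg_of_subtype_eq_zero hP e1
  have : Module.Finite R Q := Module.Finite.iff_fg.2 hQ
  have e3 : LinearMap.lTensor Q f (LinearMap.rTensor A (Submodule.inclusion hPQ) t) = 0 := by
    rw [← e2, ← LinearMap.comp_apply, ← LinearMap.comp_apply,
      LinearMap.rTensor_comp_lTensor, LinearMap.lTensor_comp_rTensor]
  have e4 := aux_fg s f g hf hfg H Q _ e3
  have e5 : LinearMap.rTensor A P.subtype t
      = LinearMap.rTensor A Q.subtype (LinearMap.rTensor A (Submodule.inclusion hPQ) t) := by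
    rw [← LinearMap.comp_apply, ← LinearMap.rTensor_comp, Submodule.subtype_comp_inclusion]
  rw [e5, ← map_smul, e4, map_zero]

open TensorProduct in
theorem aux_23 {R : Type u} [CommRing R] (s : R)
    {A B C : Type u} [AddCommGroup A] [Module R A] [AddCommGroup B] [Module R B]
    [AddCommGroup C] [Module R C]
    (f : A →ₗ[R] B) (g : B →ₗ[R] C)
    (hf : Function.Injective f) (hg : Function.Surjective g)
    (hfg : LinearMap.range f = LinearMap.ker g)
    (H : ∀ (M : Type u) [AddCommGroup M] [Module R M], Module.FinitePresentation R M →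
        ∀ x ∈ LinearMap.ker (LinearMap.lTensor M f), s • x = 0)
    (N : Type u) [AddCommGroup N] [Module R N] (hN : Module.FinitePresentation R N)
    (γ : N →ₗ[R] C) : ∃ δ : N →ₗ[R] B, g ∘ₗ δ = s • γ := by
  obtain ⟨q, p, π, φ, hπ, hex⟩ := Module.FinitePresentation.exists_fin' R N
  have hgf : ∀ y, g (f y) = 0 := fun y => by
    have : f y ∈ LinearMap.ker g := hfg ▸ LinearMap.mem_range_self f y
    exact this
  choose b hb using fun j : Fin q => hg (γ (π (Pi.single j 1)))
  let β : (Fin q → R) →ₗ[R] B := Fintype.linearCombination R b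
  have hβ : ∀ w, g (β w) = γ (π w) := by
    have : g ∘ₗ β = γ ∘ₗ π := by
      refine LinearMap.pi_ext' fun j => LinearMap.ext_ring ?_
      simp [β, hb]
    exact fun w => LinearMap.congr_fun this w
  let c : Fin p → Fin q → R := fun i => φ (Pi.single i 1)
  have hα : ∀ i, ∃ y, f y = β (c i) := fun i => by
    have : β (c i) ∈ LinearMap.range f := by
      rw [hfg, LinearMap.mem_ker, hβ, (hex (c i)).2 ⟨_, rfl⟩, map_zero]
    exact this
  choose a ha using hα
  have hβs : ∀ w, β w = ∑ j, w j • b j := fun w => by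
    simp [β, Fintype.linearCombination_apply]
  -- the transposed relations
  let r : Fin q → Fin p → R := fun j i => c i j
  let K : Submodule R (Fin p → R) := Submodule.span R (Set.range r)
  have hK : K.FG := Submodule.fg_span (Set.finite_range r)
  have hM : Module.FinitePresentation R ((Fin p → R) ⧸ K) :=
    Module.finitePresentation_of_surjective K.mkQ K.mkQ_surjective (by simpa using hK)
  let v : Fin p → (Fin p → R) ⧸ K := fun i => K.mkQ (Pi.single i 1)
  have hvs : ∀ w : Fin p → R, ∑ i, w i • v i = K.mkQ w := fun w => by
    have hw : w = ∑ i, w i • (Pi.single i (1 : R) : Fin p → R) := by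
      ext l; simp [Finset.sum_apply, Pi.single_apply]
    conv_rhs => rw [hw]
    simp only [map_sum, map_smul, v]
  have hv : Submodule.span R (Set.range v) = ⊤ := by
    rw [eq_top_iff]
    rintro y -
    obtain ⟨w, rfl⟩ := K.mkQ_surjective y
    exact (Submodule.mem_span_range_iff_exists_fun R).2 ⟨w, hvs w⟩
  have hr : ∀ j, ∑ i, c i j • v i = 0 := fun j => by
    rw [hvs (r j)]
    simpa using Submodule.subset_span (Set.mem_range_self j)
  have hker : ∑ i, v i ⊗ₜ[R] a i ∈ LinearMap.ker (LinearMap.lTensor ((Fin p → R) ⧸ K) f) := by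
    rw [LinearMap.mem_ker]
    simp only [map_sum, LinearMap.lTensor_tmul]
    exact TensorProduct.sum_tmul_eq_zero_of_vanishesTrivially R
      ⟨q, c, b, fun i => (ha i).trans (hβs (c i)), hr⟩
  have h0 := H _ hM _ hker
  rw [Finset.smul_sum] at h0
  simp_rw [← TensorProduct.tmul_smul] at h0
  obtain ⟨k, d, y, h1, h2⟩ := TensorProduct.vanishesTrivially_of_sum_tmul_eq_zero R hv h0
  have h3 : ∀ l, ∃ e : Fin q → R, ∑ j, e j • r j = fun i => d i l := fun l => by
    apply (Submodule.mem_span_range_iff_exists_fun R).1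
    have := h2 l
    rw [hvs (fun i => d i l)] at this
    simpa using this
  choose e he using h3
  have he' : ∀ i l, d i l = ∑ j, e l j * c i j := fun i l => by
    have := congr_fun (he l) i
    simpa [Finset.sum_apply, r] using this.symm
  let σ : (Fin q → R) →ₗ[R] A := Fintype.linearCombination R (fun j => ∑ l, e l j • y l)
  have hσ : ∀ i, σ (c i) = s • a i := fun i => by
    refine Eq.trans ?_ (h1 i).symm
    simp only [σ, Fintype.linearCombination_apply, he', Finset.smul_sum, Finset.sum_smul, smul_smul]
    rw [Finset.sum_comm]
    simp only [mul_comm]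
  let ψ : (Fin q → R) →ₗ[R] B := s • β - f ∘ₗ σ
  have hψ : ψ ∘ₗ φ = 0 := by
    refine LinearMap.pi_ext' fun i => LinearMap.ext_ring ?_
    have : ψ (c i) = 0 := by simp [ψ, hσ, ha]
    simpa using this
  have hψ' : LinearMap.ker π ≤ LinearMap.ker ψ := by
    intro w hw
    obtain ⟨z, rfl⟩ := (hex w).1 hw
    exact LinearMap.congr_fun hψ z
  refine ⟨(LinearMap.ker π).liftQ ψ hψ' ∘ₗ
    (π.quotKerEquivOfSurjective hπ).symm.toLinearMap, ?_⟩
  ext z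
  obtain ⟨w, rfl⟩ := hπ z
  have hw : (π.quotKerEquivOfSurjective hπ).symm (π w) = (LinearMap.ker π).mkQ w := by
    rw [LinearEquiv.symm_apply_eq]; rfl
  simp only [LinearMap.comp_apply, LinearEquiv.coe_coe, hw, LinearMap.smul_apply]
  simp [ψ, hgf, hβ]

/-- Characterizations of almost pure short exact sequences. -/
theorem almostPure_tfae
    {R : Type u} [CommRing R] (m : Ideal R) (hm : m * m = m)
    {A B C : Type u} [AddCommGroup A] [Module R A] [AddCommGroup B] [Module R B]
    [AddCommGroup C] [Module R C]
    (f : A →ₗ[R] B) (g : B →ₗ[R] C)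
    (hf : Function.Injective f) (hg : Function.Surjective g)
    (hfg : LinearMap.range f = LinearMap.ker g) :
    -- (1) ↔ (2)
    ((IsAlmostPure m f ↔
      (∀ (M : Type u) [AddCommGroup M] [Module R M], Module.FinitePresentation R M →
        ∀ s ∈ m, ∀ x ∈ LinearMap.ker (LinearMap.lTensor M f), s • x = 0)) ∧
    -- (1) ↔ (3)
    (IsAlmostPure m f ↔
      (∀ (N : Type u) [AddCommGroup N] [Module R N], Module.FinitePresentation R N →
        ∀ γ : N →ₗ[R] C, ∀ s ∈ m, ∃ δ : N →ₗ[R] B, g ∘ₗ δ = s • γ))) := by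
  have h31 : (∀ (N : Type u) [AddCommGroup N] [Module R N], Module.FinitePresentation R N →
        ∀ γ : N →ₗ[R] C, ∀ s ∈ m, ∃ δ : N →ₗ[R] B, g ∘ₗ δ = s • γ) → IsAlmostPure m f := by
    intro H M _ _ s hs x hx
    exact aux_31 s f g hf hfg (fun N _ _ hN γ => H N hN γ s hs) M x hx
  have h23 : (∀ (M : Type u) [AddCommGroup M] [Module R M], Module.FinitePresentation R M →
        ∀ s ∈ m, ∀ x ∈ LinearMap.ker (LinearMap.lTensor M f), s • x = 0) →
      (∀ (N : Type u) [AddCommGroup N] [Module R N], Module.FinitePresentation R N →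
        ∀ γ : N →ₗ[R] C, ∀ s ∈ m, ∃ δ : N →ₗ[R] B, g ∘ₗ δ = s • γ) := by
    intro H N _ _ hN γ s hs
    exact aux_23 s f g hf hg hfg (fun M _ _ hM => H M hM s hs) N hN γ
  exact ⟨⟨fun H M _ _ _ => H M, fun H => h31 (h23 H)⟩,
    ⟨fun H => h23 (fun M _ _ _ => H M), h31⟩⟩
end

section
/- For an R-module M, the following are equivalent: (1) Tor_1^R(N, M) is almost zero for every finitely presented R-module N; (2) Tor_1^R(N, M) is almost zero for every R-module N; (3) Tor_n^R(N, M) is almost zero for every R-module N and every integer n ≥ 1. (These conditions characterize M being almost flat.) -/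
universe u

open CategoryTheory

open scoped TensorProduct

lemma af_shortComplex_aux {R : Type u} [CommRing R] (S : ShortComplex (ModuleCat.{u} R)) (s : R) :
    (∀ x : S.homology, s • x = 0) ↔ ∀ z : S.X₂, S.g z = 0 → ∃ w : S.X₁, S.f w = s • z := by
  have hinj : Function.Injective S.homologyι :=
    (ModuleCat.mono_iff_injective S.homologyι).1 inferInstance
  have hsurj : Function.Surjective S.homologyπ :=
    (ModuleCat.epi_iff_surjective S.homologyπ).1 inferInstance
  have hc : ∀ c : S.cycles, S.homologyι (S.homologyπ c) = S.pOpcycles (S.iCycles c) := by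
    intro c
    have := S.homology_π_ι
    exact congr($this c)
  have key : ∀ c : S.cycles, s • S.homologyπ c = 0 ↔ ∃ w : S.X₁, S.f w = s • S.iCycles c := by
    intro c
    rw [← map_smul, ← hinj.eq_iff, hc, map_zero, S.moduleCat_pOpcycles_eq_zero_iff, map_smul]
    rfl
  constructor
  · intro h z hz
    let c : S.cycles := S.moduleCatCyclesIso.inv (⟨z, hz⟩ : LinearMap.ker S.g.hom)
    have hcz : S.iCycles c = z := by
      have := S.moduleCatCyclesIso_inv_iCycles
      exact congr($this (⟨z, hz⟩ : LinearMap.ker S.g.hom))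
    have := (key c).1 (h _)
    rwa [hcz] at this
  · intro h x
    obtain ⟨c, rfl⟩ := hsurj x
    refine (key c).2 (h _ ?_)
    have := S.iCycles_g
    exact congr($this c)

lemma af_tor_iff {R : Type u} [CommRing R] (M : ModuleCat.{u} R) (P : ProjectiveResolution M)
    (N : Type u) [AddCommGroup N] [Module R N] (n : ℕ) (s : R) :
    (∀ x : ((Tor (ModuleCat.{u} R) (n + 1)).obj (ModuleCat.of R N)).obj M, s • x = 0) ↔
    ∀ z : N ⊗[R] (P.complex.X (n + 1)), (P.complex.d (n + 1) n).hom.lTensor N z = 0 →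
      ∃ w : N ⊗[R] (P.complex.X (n + 2)),
        (P.complex.d (n + 2) (n + 1)).hom.lTensor N w = s • z := by
  let F := (MonoidalCategory.tensoringLeft (ModuleCat.{u} R)).obj (ModuleCat.of R N)
  let K := (F.mapHomologicalComplex (ComplexShape.down ℕ)).obj P.complex
  have e1 : ((Tor (ModuleCat.{u} R) (n + 1)).obj (ModuleCat.of R N)).obj M ≅ K.homology (n + 1) :=
    P.isoLeftDerivedObj F (n + 1)
  have e2 : K.homology (n + 1) ≅ (K.sc' (n + 2) (n + 1) n).homology :=
    ShortComplex.homologyMapIso (K.isoSc' (n + 2) (n + 1) n (by simp) (by simp))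
  let e := (e1 ≪≫ e2).toLinearEquiv
  have h1 := af_shortComplex_aux (K.sc' (n + 2) (n + 1) n) s
  refine Iff.trans ?_ (h1.trans Iff.rfl)
  constructor
  · intro h x
    rw [← e.apply_symm_apply x, ← map_smul, h (e.symm x), map_zero]
  · intro h x
    rw [← e.symm_apply_apply x, ← map_smul, h (e x), map_zero]

lemma af_fp {R : Type u} [CommRing R] {N P Q : Type u} [AddCommGroup N] [Module R N]
    [AddCommGroup P] [Module R P] [AddCommGroup Q] [Module R Q] (d : P →ₗ[R] Q)
    (z : N ⊗[R] P) (hz : d.lTensor N z = 0) :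
    ∃ (N' : Type u) (_ : AddCommGroup N') (_ : Module R N') (_ : Module.FinitePresentation R N')
      (f : N' →ₗ[R] N) (z' : N' ⊗[R] P), f.rTensor P z' = z ∧ d.lTensor N' z' = 0 := by
  obtain ⟨J₀, hJ₀, y₀, rfl⟩ := Submodule.exists_fg_le_eq_rTensor_subtype z
  have h0 : J₀.subtype.rTensor Q (d.lTensor J₀ y₀) = 0 := by
    rw [← hz]
    simp only [← LinearMap.comp_apply, LinearMap.lTensor_comp_rTensor,
      LinearMap.rTensor_comp_lTensor]
  obtain ⟨J, hle, hJ, h1⟩ := TensorProduct.eq_zero_of_fg_of_subtype_eq_zero hJ₀ h0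
  have : Module.Finite R J := Module.Finite.iff_fg.2 hJ
  obtain ⟨k, g, hg⟩ := Module.Finite.exists_fin' R J
  obtain ⟨z₁, hz₁⟩ := LinearMap.rTensor_surjective P hg ((Submodule.inclusion hle).rTensor P y₀)
  have h2 : g.rTensor Q (d.lTensor _ z₁) = 0 := by
    rw [← h1]
    have h3 := congrArg (d.lTensor J) hz₁
    simp only [← LinearMap.comp_apply, LinearMap.lTensor_comp_rTensor,
      LinearMap.rTensor_comp_lTensor] at h3 ⊢
    exact h3
  obtain ⟨y, hy⟩ := (rTensor_exact Q (LinearMap.exact_subtype_ker_map g) hg _).1 h2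
  obtain ⟨K', hK', hKle, y', rfl⟩ := Submodule.exists_fg_le_eq_rTensor_inclusion y
  refine ⟨(Fin k → R) ⧸ K', inferInstance, inferInstance,
    Module.finitePresentation_of_surjective K'.mkQ K'.mkQ_surjective (by simpa using hK'),
    J.subtype ∘ₗ K'.liftQ g hKle, K'.mkQ.rTensor P z₁, ?_, ?_⟩
  · rw [← LinearMap.rTensor_comp_apply, LinearMap.comp_assoc, Submodule.liftQ_mkQ,
      LinearMap.rTensor_comp_apply, hz₁, ← LinearMap.rTensor_comp_apply]
    rfl
  · have h4 : K'.mkQ.rTensor Q (d.lTensor _ z₁) = 0 := by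
      rw [← hy, ← LinearMap.rTensor_comp_apply, ← LinearMap.rTensor_comp_apply]
      have : (K'.mkQ ∘ₗ (LinearMap.ker g).subtype) ∘ₗ ( Submodule.inclusion hKle) = 0 := by
        ext x
        simp
      rw [this]
      simp
    rw [← h4]
    simp only [← LinearMap.comp_apply, LinearMap.lTensor_comp_rTensor,
      LinearMap.rTensor_comp_lTensor]

lemma af_comm {R : Type u} [CommRing R] {A B P Q : Type u} [AddCommGroup A] [Module R A]
    [AddCommGroup B] [Module R B]
    [AddCommGroup P] [Module R P] [AddCommGroup Q] [Module R Q] (f : A →ₗ[R] B) (d : P →ₗ[R] Q)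
    (z : A ⊗[R] P) : f.rTensor Q (d.lTensor A z) = d.lTensor B (f.rTensor P z) := by
  simp only [← LinearMap.comp_apply, LinearMap.lTensor_comp_rTensor,
    LinearMap.rTensor_comp_lTensor]

/-- Dimension shifting, elementwise. -/
lemma af_shift {R : Type u} [CommRing R] {N P₃ P₂ P₁ P₀ : Type u} [AddCommGroup N] [Module R N]
    [AddCommGroup P₃] [Module R P₃] [AddCommGroup P₂] [Module R P₂]
    [AddCommGroup P₁] [Module R P₁] [AddCommGroup P₀] [Module R P₀]
    [Module.Flat R P₀]
    (d₃ : P₃ →ₗ[R] P₂) (d₂ : P₂ →ₗ[R] P₁) (d₁ : P₁ →ₗ[R] P₀)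
    (h₃ : Function.Exact d₃ d₂) (h₂ : d₁ ∘ₗ d₂ = 0) (s : R)
    (ih : ∀ (K : Type u) [AddCommGroup K] [Module R K] (y : K ⊗[R] P₁), d₁.lTensor K y = 0 →
      ∃ w, d₂.lTensor K w = s • y)
    (z : N ⊗[R] P₂) (hz : d₂.lTensor N z = 0) : ∃ v, d₃.lTensor N v = s • z := by
  obtain ⟨F, _, _, _, g, hg⟩ : ∃ (F : Type u) (_ : AddCommGroup F) (_ : Module R F)
      (_ : Module.Flat R F) (g : F →ₗ[R] N), Function.Surjective g :=
    ⟨N →₀ R, inferInstance, inferInstance, inferInstance, Finsupp.linearCombination R id,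
      Finsupp.linearCombination_id_surjective R N⟩
  obtain ⟨i, hi, hig⟩ : ∃ i : LinearMap.ker g →ₗ[R] F,
      Function.Injective i ∧ Function.Exact i g :=
    ⟨(LinearMap.ker g).subtype, (LinearMap.ker g).injective_subtype,
      LinearMap.exact_subtype_ker_map g⟩
  obtain ⟨z, rfl⟩ := LinearMap.rTensor_surjective P₂ hg z
  rw [← af_comm] at hz
  obtain ⟨y, hy⟩ := (rTensor_exact P₁ hig hg _).1 hz
  have hy0 : d₁.lTensor _ y = 0 := by
    apply Module.Flat.rTensor_preserves_injective_linearMap (M := P₀) i hi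
    rw [af_comm, hy, ← LinearMap.lTensor_comp_apply, h₂]
    simp
  obtain ⟨w, hw⟩ := ih _ y hy0
  have h5 : d₂.lTensor _ (s • z - i.rTensor P₂ w) = 0 := by
    rw [map_sub, map_smul, ← af_comm, hw, map_smul, hy, sub_self]
  obtain ⟨v, hv⟩ := (Module.Flat.lTensor_exact F h₃ _).1 h5
  refine ⟨g.rTensor P₃ v, ?_⟩
  rw [← af_comm, hv, map_sub, map_smul, (rTensor_exact P₂ hig hg).apply_apply_eq_zero, sub_zero]

/-- Characterizations of almost flatness of `M` in terms of `Tor`. -/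
theorem almostFlat_tor_tfae
    {R : Type u} [CommRing R] (m : Ideal R) (hm : m * m = m)
    (M : Type u) [AddCommGroup M] [Module R M] :
    -- (1) ↔ (2)
    (((∀ (N : Type u) [AddCommGroup N] [Module R N], Module.FinitePresentation R N →
        ∀ s ∈ m, ∀ x : ((Tor (ModuleCat.{u} R) 1).obj (ModuleCat.of R N)).obj (ModuleCat.of R M),
          s • x = 0) ↔
      (∀ (N : Type u) [AddCommGroup N] [Module R N],
        ∀ s ∈ m, ∀ x : ((Tor (ModuleCat.{u} R) 1).obj (ModuleCat.of R N)).obj (ModuleCat.of R M),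
          s • x = 0)) ∧
    -- (2) ↔ (3)
    ((∀ (N : Type u) [AddCommGroup N] [Module R N],
        ∀ s ∈ m, ∀ x : ((Tor (ModuleCat.{u} R) 1).obj (ModuleCat.of R N)).obj (ModuleCat.of R M),
          s • x = 0) ↔
      (∀ (N : Type u) [AddCommGroup N] [Module R N], ∀ n : ℕ, 1 ≤ n →
        ∀ s ∈ m, ∀ x : ((Tor (ModuleCat.{u} R) n).obj (ModuleCat.of R N)).obj (ModuleCat.of R M),
          s • x = 0))) := by
  obtain ⟨P⟩ := (inferInstance : HasProjectiveResolution (ModuleCat.of R M)).out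
  refine ⟨⟨?_, fun h N _ _ _ => h N⟩, ⟨?_, fun h N _ _ => h N 1 le_rfl⟩⟩
  · intro h N _ _ s hs
    refine (af_tor_iff (ModuleCat.of R M) P N 0 s).2 ?_
    intro z hz
    obtain ⟨N', _, _, hfp, f, z', rfl, hz'⟩ := af_fp _ z hz
    obtain ⟨w, hw⟩ := (af_tor_iff (ModuleCat.of R M) P N' 0 s).1 (h N' hfp s hs) z' hz'
    exact ⟨f.rTensor _ w, by rw [← af_comm, hw, map_smul]⟩
  · intro h N _ _ n hn s hs
    obtain ⟨n, rfl⟩ := Nat.exists_eq_add_of_le' hn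
    refine (af_tor_iff (ModuleCat.of R M) P N n s).2 ?_
    clear hn
    induction n generalizing N with
    | zero => exact (af_tor_iff (ModuleCat.of R M) P N 0 s).1 (h N s hs)
    | succ n ih =>
      have : Module.Projective R (P.complex.X n) :=
        (IsProjective.iff_projective (P.complex.X n)).2 (P.projective n)
      have hex := (ShortComplex.ShortExact.moduleCat_exact_iff_function_exact _).1
        (P.exact_succ (n + 1))
      have hc : (P.complex.d (n + 1) n).hom ∘ₗ (P.complex.d (n + 2) (n + 1)).hom = 0 :=
        congrArg ModuleCat.Hom.hom (P.complex.d_comp_d (n + 2) (n + 1) n)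
      intro z hz
      exact af_shift _ _ _ hex hc s (fun K _ _ => ih K) z hz
end

section
/- Let 0 → A → B → C → 0 be an almost pure short exact sequence of R-modules with B almost flat. Then both A and C are almost flat. -/
universe u

open CategoryTheory

/-- A module `F` is almost flat if `Tor₁ᴿ(N, F)` is almost zero for every module `N`. -/
def IsAlmostFlat {R : Type u} [CommRing R] (m : Ideal R)
    (F : Type u) [AddCommGroup F] [Module R F] : Prop :=
  ∀ (N : Type u) [AddCommGroup N] [Module R N],
    ∀ s ∈ m, ∀ x : ((Tor (ModuleCat.{u} R) 1).obj (ModuleCat.of R N)).obj (ModuleCat.of R F),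
      s • x = 0

open TensorProduct

/-- Abstract snake-type chase on a grid of modules. -/
theorem AF_chase {R : Type u} [CommRing R]
    {X11 X12 X13 X21 X22 X23 X31 X32 : Type u}
    [AddCommGroup X11] [AddCommGroup X12] [AddCommGroup X13] [AddCommGroup X21]
    [AddCommGroup X22] [AddCommGroup X23] [AddCommGroup X31] [AddCommGroup X32]
    [Module R X11] [Module R X12] [Module R X13] [Module R X21]
    [Module R X22] [Module R X23] [Module R X31] [Module R X32]
    (a1 : X11 →ₗ[R] X12) (b1 : X12 →ₗ[R] X13)
    (a2 : X21 →ₗ[R] X22) (b2 : X22 →ₗ[R] X23) (a3 : X31 →ₗ[R] X32)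
    (c1 : X11 →ₗ[R] X21) (d1 : X21 →ₗ[R] X31)
    (c2 : X12 →ₗ[R] X22) (d2 : X22 →ₗ[R] X32) (c3 : X13 →ₗ[R] X23)
    (h11 : c2 ∘ₗ a1 = a2 ∘ₗ c1) (h12 : c3 ∘ₗ b1 = b2 ∘ₗ c2) (h21 : d2 ∘ₗ a2 = a3 ∘ₗ d1)
    (hb1 : Function.Surjective b1) (hab1 : Function.Exact a1 b1)
    (hab2 : Function.Exact a2 b2) (hcd1 : Function.Exact c1 d1) (hcd2 : Function.Exact c2 d2)
    (s t : R) (hs : ∀ w, a3 w = 0 → s • w = 0) (ht : ∀ y, c2 y = 0 → t • y = 0)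
    (z : X13) (hz : c3 z = 0) : (t * s) • z = 0 := by
  obtain ⟨y, rfl⟩ := hb1 z
  have e1 : b2 (c2 y) = 0 := by rw [← hz]; exact (LinearMap.congr_fun h12 y).symm
  obtain ⟨w, hw⟩ := (hab2 _).1 e1
  have e2 : a3 (d1 w) = 0 := by
    have h := LinearMap.congr_fun h21 w
    simp only [LinearMap.comp_apply] at h
    rw [← h, hw]
    exact hcd2.apply_apply_eq_zero y
  have e3 : d1 (s • w) = 0 := by rw [map_smul]; exact hs _ e2
  obtain ⟨v, hv⟩ := (hcd1 _).1 e3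
  have e4 : c2 (s • y - a1 v) = 0 := by
    have h := LinearMap.congr_fun h11 v
    simp only [LinearMap.comp_apply] at h
    rw [map_sub, h, hv, map_smul, map_smul, hw, sub_self]
  have e5 := congrArg b1 (ht _ e4)
  rw [map_smul, map_sub, hab1.apply_apply_eq_zero, sub_zero, map_smul, map_zero] at e5
  rw [mul_smul, e5]

/-- Tensoring with `F` almost preserves inclusions of submodules. -/
def AFQ {R : Type u} [CommRing R] (m : Ideal R)
    (F : Type u) [AddCommGroup F] [Module R F] : Prop :=
  ∀ (L : Type u) [AddCommGroup L] [Module R L] (K : Submodule R L),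
    ∀ s ∈ m, ∀ x : K ⊗[R] F, K.subtype.rTensor F x = 0 → s • x = 0

/-- Quotient part, with a pair of scalars. -/
theorem AF_quot {R : Type u} [CommRing R]
    {A B C : Type u} [AddCommGroup A] [Module R A] [AddCommGroup B] [Module R B]
    [AddCommGroup C] [Module R C]
    (f : A →ₗ[R] B) (g : B →ₗ[R] C) (hg : Function.Surjective g) (hfg : Function.Exact f g)
    (L : Type u) [AddCommGroup L] [Module R L] (K : Submodule R L) (s t : R)
    (hs : ∀ w : (L ⧸ K) ⊗[R] A, f.lTensor (L ⧸ K) w = 0 → s • w = 0)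
    (ht : ∀ y : K ⊗[R] B, K.subtype.rTensor B y = 0 → t • y = 0)
    (z : K ⊗[R] C) (hz : K.subtype.rTensor C z = 0) : (t * s) • z = 0 := by
  refine AF_chase (f.lTensor K) (g.lTensor K) (f.lTensor L) (g.lTensor L) (f.lTensor (L ⧸ K))
    (K.subtype.rTensor A) (K.mkQ.rTensor A) (K.subtype.rTensor B) (K.mkQ.rTensor B)
    (K.subtype.rTensor C) ?_ ?_ ?_ (LinearMap.lTensor_surjective _ hg)
    (lTensor_exact _ hfg hg) (lTensor_exact _ hfg hg)
    (rTensor_exact _ (LinearMap.exact_subtype_mkQ K) K.mkQ_surjective)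
    (rTensor_exact _ (LinearMap.exact_subtype_mkQ K) K.mkQ_surjective) s t hs ht z hz
  all_goals rw [LinearMap.lTensor_comp_rTensor, LinearMap.rTensor_comp_lTensor]

/-- Auxiliary version with a chosen flat cover `L` of `N`. -/
theorem AF_pure_aux {R : Type u} [CommRing R] (m : Ideal R)
    {A B C : Type u} [AddCommGroup A] [Module R A] [AddCommGroup B] [Module R B]
    [AddCommGroup C] [Module R C]
    (f : A →ₗ[R] B) (g : B →ₗ[R] C) (hf : Function.Injective f)
    (hg : Function.Surjective g) (hfg : Function.Exact f g)
    (hC : AFQ m C)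
    (N L : Type u) [AddCommGroup N] [Module R N] [AddCommGroup L] [Module R L] [Module.Flat R L]
    (p : L →ₗ[R] N) (hp : Function.Surjective p) (s : R) (hs : s ∈ m)
    (x : N ⊗[R] A) (hx : f.lTensor N x = 0) : s • x = 0 := by
  obtain ⟨K, hKp⟩ : ∃ K : Submodule R L, Function.Exact K.subtype p :=
    ⟨LinearMap.ker p, LinearMap.exact_subtype_ker_map p⟩
  have hinj : Function.Injective (f.lTensor L) :=
    Module.Flat.lTensor_preserves_injective_linearMap f hf
  rw [← one_mul s]
  refine AF_chase (K.subtype.rTensor A) (p.rTensor A) (K.subtype.rTensor B) (p.rTensor B)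
    (K.subtype.rTensor C)
    (f.lTensor K) (g.lTensor K) (f.lTensor L) (g.lTensor L) (f.lTensor N)
    ?_ ?_ ?_ (LinearMap.rTensor_surjective _ hp)
    (rTensor_exact _ hKp hp) (rTensor_exact _ hKp hp)
    (lTensor_exact _ hfg hg) (lTensor_exact _ hfg hg) s 1
    (fun w hw => hC _ K s hs w hw) (fun y hy => ?_) x hx
  · rw [LinearMap.lTensor_comp_rTensor, LinearMap.rTensor_comp_lTensor]
  · rw [LinearMap.lTensor_comp_rTensor, LinearMap.rTensor_comp_lTensor]
  · rw [LinearMap.lTensor_comp_rTensor, LinearMap.rTensor_comp_lTensor]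
  · rw [one_smul]; exact hinj (by rw [hy, map_zero])

/-- A module satisfying `AFQ` makes the kernel of any presentation almost pure. -/
theorem AF_pure_of_Q {R : Type u} [CommRing R] (m : Ideal R)
    {A B C : Type u} [AddCommGroup A] [Module R A] [AddCommGroup B] [Module R B]
    [AddCommGroup C] [Module R C]
    (f : A →ₗ[R] B) (g : B →ₗ[R] C) (hf : Function.Injective f)
    (hg : Function.Surjective g) (hfg : Function.Exact f g)
    (hC : AFQ m C) : IsAlmostPure m f := by
  intro N _ _ s hs x hx
  exact AF_pure_aux m f g hf hg hfg hC N (N →₀ R) (Finsupp.linearCombination R id)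
    (Finsupp.linearCombination_id_surjective R N) s hs x hx

theorem AF_shortComplex {R : Type u} [CommRing R] (S : ShortComplex (ModuleCat.{u} R)) (s : R) :
    (∀ x : S.homology, s • x = 0) ↔
      ∀ x : S.X₂, S.g.hom x = 0 → ∃ y : S.X₁, S.f.hom y = s • x := by
  let e : S.homology ≃ₗ[R] (LinearMap.ker S.g.hom ⧸ LinearMap.range S.moduleCatToCycles) :=
    S.moduleCatHomologyIso.toLinearEquiv
  constructor
  · intro h x hx
    have h1 := h (e.symm (Submodule.Quotient.mk ⟨x, hx⟩))
    rw [← map_smul, LinearEquiv.map_eq_zero_iff, ← Submodule.Quotient.mk_smul,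
      Submodule.Quotient.mk_eq_zero] at h1
    obtain ⟨y, hy⟩ := h1
    exact ⟨y, congrArg Subtype.val hy⟩
  · intro h x
    obtain ⟨q, rfl⟩ := e.symm.surjective x
    obtain ⟨⟨x, hx⟩, rfl⟩ := Submodule.Quotient.mk_surjective _ q
    rw [← map_smul, LinearEquiv.map_eq_zero_iff, ← Submodule.Quotient.mk_smul,
      Submodule.Quotient.mk_eq_zero]
    obtain ⟨y, hy⟩ := h x hx
    exact ⟨y, Subtype.ext hy⟩

theorem AF_tor {R : Type u} [CommRing R] (N F : Type u) [AddCommGroup N] [Module R N]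
    [AddCommGroup F] [Module R F] (P : ProjectiveResolution (ModuleCat.of R F)) (s : R) :
    (∀ x : ((Tor (ModuleCat.{u} R) 1).obj (ModuleCat.of R N)).obj (ModuleCat.of R F),
      s • x = 0) ↔
    ∀ x : N ⊗[R] (P.complex.X 1), (P.complex.d 1 0).hom.lTensor N x = 0 →
      ∃ y : N ⊗[R] (P.complex.X 2), (P.complex.d 2 1).hom.lTensor N y = s • x := by
  let G := (MonoidalCategory.tensoringLeft (ModuleCat.{u} R)).obj (ModuleCat.of R N)
  let X := (G.mapHomologicalComplex (ComplexShape.down ℕ)).obj P.complex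
  let e1 : ((Tor (ModuleCat.{u} R) 1).obj (ModuleCat.of R N)).obj (ModuleCat.of R F) ≅
    X.homology 1 := P.isoLeftDerivedObj G 1
  let e2 : X.homology 1 ≅ (X.sc' 2 1 0).homology :=
    ShortComplex.homologyMapIso (X.isoSc' 2 1 0 (by simp) (by simp))
  let e := (e1 ≪≫ e2).toLinearEquiv
  refine Iff.trans ?_ (AF_shortComplex (X.sc' 2 1 0) s)
  constructor
  · intro h x
    obtain ⟨y, rfl⟩ := e.surjective x
    rw [← map_smul, h, map_zero]
  · intro h x
    apply e.injective
    rw [map_smul, h, map_zero]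

theorem AF_iff {R : Type u} [CommRing R] (m : Ideal R)
    (F : Type u) [AddCommGroup F] [Module R F] : IsAlmostFlat m F ↔ AFQ m F := by
  let P := projectiveResolution (ModuleCat.of R F)
  let ε : P.complex.X 0 →ₗ[R] F := (P.π.f 0).hom
  have hε : Function.Surjective ε := (ModuleCat.epi_iff_surjective (P.π.f 0)).1 inferInstance
  let d1 := (P.complex.d 1 0).hom
  let d2 := (P.complex.d 2 1).hom
  have ex0 : Function.Exact d1 ε :=
    (ShortComplex.ShortExact.moduleCat_exact_iff_function_exact _).1 P.exact₀
  have ex1 : Function.Exact d2 d1 :=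
    (ShortComplex.ShortExact.moduleCat_exact_iff_function_exact _).1 (P.exact_succ 0)
  haveI : Projective (P.complex.X 0) := P.projective 0
  haveI : Module.Projective R (P.complex.X 0) :=
    (IsProjective.iff_projective _).2 (P.projective 0)
  let K := LinearMap.ker ε
  let π : P.complex.X 1 →ₗ[R] K := d1.codRestrict K (fun x => ex0.apply_apply_eq_zero x)
  have hπ : Function.Surjective π := by
    rintro ⟨y, hy⟩
    obtain ⟨x, hx⟩ := (ex0 y).1 hy
    exact ⟨x, Subtype.ext hx⟩
  have hd : d1 = K.subtype ∘ₗ π := rfl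
  have exπ : Function.Exact d2 π := by
    intro x
    rw [← ex1 x]
    exact ⟨fun h => congrArg Subtype.val h, fun h => Subtype.ext h⟩
  have exK : Function.Exact K.subtype ε := LinearMap.exact_subtype_ker_map ε
  have key : IsAlmostFlat m F ↔ IsAlmostPure m K.subtype := by
    constructor
    · intro h N _ _ s hs y hy
      have h1 := (AF_tor N F P s).1 (h N s hs)
      obtain ⟨x, rfl⟩ := LinearMap.lTensor_surjective N hπ y
      obtain ⟨w, hw⟩ := h1 x (by
        change d1.lTensor N x = 0
        rw [hd, LinearMap.lTensor_comp]; exact hy)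
      rw [← map_smul, ← hw]
      exact (lTensor_exact N exπ hπ).apply_apply_eq_zero w
    · intro h N _ _ s hs
      refine (AF_tor N F P s).2 fun x hx => ?_
      refine (lTensor_exact N exπ hπ _).1 ?_
      rw [map_smul]
      refine h N s hs _ ?_
      change d1.lTensor N x = 0 at hx
      rw [hd, LinearMap.lTensor_comp] at hx
      exact hx
  rw [key]
  constructor
  · intro h L _ _ K' s hs x hx
    rw [← one_mul s]
    refine AF_quot K.subtype ε hε exK L K' s 1 (fun w hw => h _ s hs w hw) (fun y hy => ?_) x hx
    have hinj : Function.Injective (K'.subtype.rTensor (P.complex.X 0)) :=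
      Module.Flat.rTensor_preserves_injective_linearMap _ K'.subtype_injective
    rw [one_smul]; exact hinj (by rw [hy, map_zero])
  · exact AF_pure_of_Q m K.subtype ε K.subtype_injective hε exK

theorem AF_mul {R : Type u} [CommRing R] (m : Ideal R) (hm : m * m = m)
    {M : Type u} [AddCommGroup M] [Module R M] (x : M)
    (h : ∀ s ∈ m, ∀ t ∈ m, (t * s) • x = 0) (r : R) (hr : r ∈ m) : r • x = 0 := by
  rw [← hm] at hr
  refine Submodule.mul_induction_on hr (fun t ht s hs => h s hs t ht) fun a b ha hb => ?_
  rw [add_smul, ha, hb, add_zero]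

/-- Almost pure submodules and almost pure quotients of
almost flat modules are almost flat. -/
theorem almostFlat_of_almostPure
    {R : Type u} [CommRing R] (m : Ideal R) (hm : m * m = m)
    {A B C : Type u} [AddCommGroup A] [Module R A] [AddCommGroup B] [Module R B]
    [AddCommGroup C] [Module R C]
    (f : A →ₗ[R] B) (g : B →ₗ[R] C)
    (hf : Function.Injective f) (hg : Function.Surjective g)
    (hfg : LinearMap.range f = LinearMap.ker g)
    (hpure : IsAlmostPure m f) (hB : IsAlmostFlat m B) :
    IsAlmostFlat m A ∧ IsAlmostFlat m C := by
  rw [AF_iff] at hB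
  rw [AF_iff, AF_iff]
  have hex : Function.Exact f g := LinearMap.exact_iff.2 hfg.symm
  constructor
  · intro L _ _ K r hr x hx
    refine AF_mul m hm x (fun s hs t ht => ?_) r hr
    rw [mul_comm, mul_smul, smul_comm]
    have h1 : K.subtype.rTensor B (f.lTensor K x) = 0 := by
      rw [← LinearMap.comp_apply, LinearMap.rTensor_comp_lTensor,
        ← LinearMap.lTensor_comp_rTensor, LinearMap.comp_apply, hx, map_zero]
    have h2 := hB L K s hs _ h1
    rw [← map_smul] at h2
    exact hpure K t ht _ h2
  · intro L _ _ K r hr x hx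
    refine AF_mul m hm x (fun s hs t ht => ?_) r hr
    exact AF_quot f g hg hex L K s t (fun w hw => hpure _ s hs w hw) (hB L K t ht) x hx
end

section
/- An R-module F is almost flat if and only if every short exact sequence of R-modules of the form 0 → A → B → F → 0 is almost pure. -/
universe u

open CategoryTheory

open TensorProduct

theorem sc_smul_homology_iff {R : Type u} [CommRing R] (S : ShortComplex (ModuleCat.{u} R)) (s : R) :
    (∀ x : S.homology, s • x = 0) ↔
      ∀ z : S.X₂, S.g.hom z = 0 → ∃ w : S.X₁, S.f.hom w = s • z := by
  let e : S.homology ≃ₗ[R] (LinearMap.ker S.g.hom ⧸ LinearMap.range S.moduleCatToCycles) :=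
    S.moduleCatHomologyIso.toLinearEquiv
  have h1 : (∀ x : S.homology, s • x = 0) ↔
      ∀ y : (LinearMap.ker S.g.hom ⧸ LinearMap.range S.moduleCatToCycles), s • y = 0 := by
    constructor
    · intro h y
      have h2 := congrArg e (h (e.symm y))
      rw [map_smul, e.apply_symm_apply, map_zero] at h2
      exact h2
    · intro h x
      apply e.injective
      rw [map_smul, map_zero]
      exact h (e x)
  rw [h1]
  constructor
  · intro h z hz
    have h2 := h (Submodule.Quotient.mk ⟨z, hz⟩)
    rw [← Submodule.Quotient.mk_smul, Submodule.Quotient.mk_eq_zero] at h2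
    obtain ⟨w, hw⟩ := h2
    exact ⟨w, congrArg Subtype.val hw⟩
  · intro h y
    obtain ⟨⟨z, hz⟩, rfl⟩ := Submodule.Quotient.mk_surjective _ y
    rw [← Submodule.Quotient.mk_smul, Submodule.Quotient.mk_eq_zero]
    obtain ⟨w, hw⟩ := h z hz
    exact ⟨w, Subtype.ext hw⟩

theorem tor_smul_iff {R : Type u} [CommRing R] (F : ModuleCat.{u} R) (P : ProjectiveResolution F)
    (N : Type u) [AddCommGroup N] [Module R N] (s : R) :
    (∀ x : ((Tor (ModuleCat.{u} R) 1).obj (ModuleCat.of R N)).obj F, s • x = 0) ↔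
      ∀ z : N ⊗[R] (P.complex.X 1), LinearMap.lTensor N (P.complex.d 1 0).hom z = 0 →
        ∃ w, LinearMap.lTensor N (P.complex.d 2 1).hom w = s • z := by
  let T := (MonoidalCategory.tensoringLeft (ModuleCat.{u} R)).obj (ModuleCat.of R N)
  let C := (T.mapHomologicalComplex _).obj P.complex
  let e : ((Tor (ModuleCat.{u} R) 1).obj (ModuleCat.of R N)).obj F ≅ (C.sc' 2 1 0).homology :=
    P.isoLeftDerivedObj T 1 ≪≫ (ShortComplex.homologyMapIso (C.isoSc' 2 1 0 (by simp) (by simp)))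
  let e' := e.toLinearEquiv
  have h1 := sc_smul_homology_iff (C.sc' 2 1 0) s
  refine Iff.trans ?_ h1
  constructor
  · intro h y
    have h2 := congrArg e' (h (e'.symm y))
    rw [map_smul, e'.apply_symm_apply, map_zero] at h2
    exact h2
  · intro h x
    apply e'.injective
    rw [map_smul, map_zero]
    exact h (e' x)

theorem exists_presentation {R : Type u} [CommRing R] (F : Type u) [AddCommGroup F] [Module R F] :
    ∃ (P : ProjectiveResolution (ModuleCat.of R F)) (ε : P.complex.X 0 →ₗ[R] F),
      Function.Exact (P.complex.d 2 1).hom (P.complex.d 1 0).hom ∧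
      Function.Exact (P.complex.d 1 0).hom ε ∧ Function.Surjective ε ∧
      Module.Projective R (P.complex.X 0) := by
  obtain ⟨P⟩ := (inferInstance : HasProjectiveResolution (ModuleCat.of R F)).out
  refine ⟨P, (P.π.f 0).hom, ?_, ?_, ?_, ?_⟩
  · exact (ShortComplex.ShortExact.moduleCat_exact_iff_function_exact _).1 (P.exact_succ 0)
  · exact (ShortComplex.ShortExact.moduleCat_exact_iff_function_exact _).1 P.exact₀
  · exact (ModuleCat.epi_iff_surjective (P.π.f 0)).1 inferInstance
  · have := P.projective 0
    exact (IsProjective.iff_projective _).2 this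

/-- A module `F` is almost flat iff every short exact sequence
`0 → A → B → F → 0` is almost pure. -/
theorem almostFlat_iff_ses_almostPure
    {R : Type u} [CommRing R] (m : Ideal R) (hm : m * m = m)
    (F : Type u) [AddCommGroup F] [Module R F] :
    IsAlmostFlat m F ↔
      (∀ (A B : Type u) [AddCommGroup A] [Module R A] [AddCommGroup B] [Module R B],
        ∀ (i : A →ₗ[R] B) (p : B →ₗ[R] F),
          Function.Injective i → Function.Surjective p →
            LinearMap.range i = LinearMap.ker p → IsAlmostPure m i) := by
  obtain ⟨P, ε, hex1, hex0, hε, hP⟩ := exists_presentation (R := R) F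
  -- the surjection onto the first syzygy
  let q : P.complex.X 1 →ₗ[R] LinearMap.ker ε :=
    (P.complex.d 1 0).hom.codRestrict _ (fun x => hex0.apply_apply_eq_zero x)
  have hq : Function.Surjective q := by
    rintro ⟨y, hy⟩
    obtain ⟨x, hx⟩ := (hex0 y).1 hy
    exact ⟨x, Subtype.ext hx⟩
  have hqd : (LinearMap.ker ε).subtype ∘ₗ q = (P.complex.d 1 0).hom := rfl
  have hexq : Function.Exact (P.complex.d 2 1).hom q := by
    intro x
    rw [← hex1 x, ← Subtype.coe_inj]
    rfl
  have hqd' : ∀ (N : Type u) [AddCommGroup N] [Module R N] (z : N ⊗[R] (P.complex.X 1)),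
      LinearMap.lTensor N (P.complex.d 1 0).hom z =
        LinearMap.lTensor N (LinearMap.ker ε).subtype (LinearMap.lTensor N q z) := by
    intro N _ _ z
    rw [← hqd, LinearMap.lTensor_comp]; rfl
  constructor
  · intro hF A B _ _ _ _ i p hi hp hip N _ _ s hs x hx
    have key := (tor_smul_iff _ P N s).1 (hF N s hs)
    obtain ⟨g, hg⟩ := Module.projective_lifting_property p ε hp
    have hg' : ∀ y, p (g y) = ε y := fun y => LinearMap.congr_fun hg y
    have hgr : ∀ k : LinearMap.ker ε, g k ∈ LinearMap.range i := by
      intro k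
      rw [hip, LinearMap.mem_ker, hg']
      exact k.2
    let e := LinearEquiv.ofInjective i hi
    let j : LinearMap.ker ε →ₗ[R] A :=
      e.symm.toLinearMap ∘ₗ (g ∘ₗ (LinearMap.ker ε).subtype).codRestrict _ hgr
    have hj : ∀ k, i (j k) = g k := fun k =>
      congrArg Subtype.val (e.apply_symm_apply ⟨g k, hgr k⟩)
    let α : LinearMap.ker ε →ₗ[R] (P.complex.X 0) × A :=
      LinearMap.prod (LinearMap.ker ε).subtype j
    let β : (P.complex.X 0) × A →ₗ[R] B := LinearMap.coprod g (-i)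
    have hβ : Function.Surjective β := by
      intro b
      obtain ⟨y, hy⟩ := hε (p b)
      have : g y - b ∈ LinearMap.range i := by
        rw [hip, LinearMap.mem_ker, map_sub, hg', hy, sub_self]
      obtain ⟨a, ha⟩ := this
      exact ⟨(y, a), by simp [β, ha]⟩
    have hαβ : Function.Exact α β := by
      rintro ⟨y, a⟩
      constructor
      · intro h
        have h1 : g y = i a := by
          have : g y + -(i a) = 0 := h
          exact add_neg_eq_zero.1 this
        have hy : ε y = 0 := by
          rw [← hg', h1, ← LinearMap.mem_ker, ← hip]
          exact ⟨a, rfl⟩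
        refine ⟨⟨y, hy⟩, Prod.ext rfl (hi ?_)⟩
        exact (hj ⟨y, hy⟩).trans h1
      · rintro ⟨k, hk⟩
        rw [← hk]
        change g k + -(i (j k)) = 0
        rw [hj, add_neg_cancel]
    have hT := lTensor_exact N hαβ hβ
    obtain ⟨y, hy⟩ := (hT (LinearMap.lTensor N (LinearMap.inr R (P.complex.X 0) A) x)).1 (by
      rw [← LinearMap.lTensor_comp_apply]
      have : β ∘ₗ LinearMap.inr R (P.complex.X 0) A = -i := by simp [β]
      rw [this, LinearMap.lTensor_neg, LinearMap.neg_apply, LinearMap.mem_ker.1 hx, neg_zero])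
    have hy1 : LinearMap.lTensor N (LinearMap.ker ε).subtype y = 0 := by
      have h := congrArg (LinearMap.lTensor N (LinearMap.fst R (P.complex.X 0) A)) hy
      rw [← LinearMap.lTensor_comp_apply, ← LinearMap.lTensor_comp_apply,
        LinearMap.fst_comp_inr, LinearMap.lTensor_zero] at h
      exact h
    have hy2 : LinearMap.lTensor N j y = x := by
      have h := congrArg (LinearMap.lTensor N (LinearMap.snd R (P.complex.X 0) A)) hy
      rw [← LinearMap.lTensor_comp_apply, ← LinearMap.lTensor_comp_apply,
        LinearMap.snd_comp_inr, LinearMap.lTensor_id] at h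
      exact h
    obtain ⟨z, hz⟩ := LinearMap.lTensor_surjective N hq y
    obtain ⟨w, hw⟩ := key z (by rw [hqd', hz, hy1])
    have : s • y = 0 := by
      rw [← hz, ← map_smul, ← hw]
      exact (lTensor_exact N hexq hq).apply_apply_eq_zero w
    rw [← hy2, ← map_smul, this, map_zero]
  · intro h N _ _ s hs
    refine (tor_smul_iff _ P N s).2 ?_
    intro z hz
    have hpure := h (LinearMap.ker ε) (P.complex.X 0) (LinearMap.ker ε).subtype ε
      Subtype.val_injective hε (Submodule.range_subtype _) N s hs (LinearMap.lTensor N q z)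
      (by rw [LinearMap.mem_ker, ← hqd', hz])
    rw [← map_smul] at hpure
    exact (lTensor_exact N hexq hq _).1 hpure
end

section
/- The ring R is almost coherent if and only if every R-module M admits an almost flat preenvelope, i.e., an R-linear map f : M → F with F almost flat such that for every almost flat R-module F' and every R-linear map g : M → F' there exists an R-linear map h : F → F' with g = h ∘ f. -/
universe u

open CategoryTheory

/-- `R` is almost coherent: every almost finitely generated ideal is
almost finitely presented. -/
def IsAlmostCoherent {R : Type u} [CommRing R] (m : Ideal R) : Prop :=
  ∀ I : Ideal R, IsAlmostFG m I → IsAlmostFP m I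

section Aux

open TensorProduct

lemma kill_congr {R A B : Type*} [CommRing R] [AddCommGroup A] [AddCommGroup B] [Module R A]
    [Module R B] (e : A ≃ₗ[R] B) (s : R) : (∀ x : A, s • x = 0) ↔ ∀ x : B, s • x = 0 := by
  constructor
  · intro h x
    rw [← e.apply_symm_apply x, ← map_smul, h, map_zero]
  · intro h x
    rw [← e.symm_apply_apply x, ← map_smul, h, map_zero]

lemma sc_kill {R : Type u} [CommRing R] (S : ShortComplex (ModuleCat.{u} R)) (s : R) :
    (∀ x : S.homology, s • x = 0) ↔ ∀ x : S.X₂, S.g.hom x = 0 → s • x ∈ LinearMap.range S.f.hom := by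
  have e : S.homology ≃ₗ[R] (LinearMap.ker S.g.hom ⧸ LinearMap.range S.moduleCatToCycles) :=
    S.moduleCatHomologyIso.toLinearEquiv
  have h1 : (∀ x : S.homology, s • x = 0) ↔ ∀ x : (LinearMap.ker S.g.hom ⧸ LinearMap.range S.moduleCatToCycles), s • x = 0 := kill_congr e s
  rw [h1]
  constructor
  · intro h x hx
    have := h (Submodule.Quotient.mk ⟨x, hx⟩)
    rw [← Submodule.Quotient.mk_smul, Submodule.Quotient.mk_eq_zero] at this
    obtain ⟨y, hy⟩ := this
    exact ⟨y, congrArg Subtype.val hy⟩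
  · intro h x
    obtain ⟨⟨x, hx⟩, rfl⟩ := Submodule.Quotient.mk_surjective _ x
    rw [← Submodule.Quotient.mk_smul, Submodule.Quotient.mk_eq_zero]
    obtain ⟨y, hy⟩ := h x hx
    exact ⟨y, Subtype.ext hy⟩

lemma exists_res {R : Type u} [CommRing R] (F : Type u) [AddCommGroup F] [Module R F] :
    ∃ (P₂ P₁ P₀ : ModuleCat.{u} R) (d₂ : P₂ →ₗ[R] P₁) (d₁ : P₁ →ₗ[R] P₀) (e : P₀ →ₗ[R] F),
      Module.Flat R P₀ ∧ Function.Exact d₂ d₁ ∧ Function.Exact d₁ e ∧ Function.Surjective e ∧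
      ∀ (N : Type u) [AddCommGroup N] [Module R N] (s : R),
        (∀ x : ((Tor (ModuleCat.{u} R) 1).obj (ModuleCat.of R N)).obj (ModuleCat.of R F), s • x = 0) ↔
        ∀ x : N ⊗[R] P₁, d₁.lTensor N x = 0 → s • x ∈ LinearMap.range (d₂.lTensor N) := by
  let P := ProjectiveResolution.of (ModuleCat.of R F)
  refine ⟨P.complex.X 2, P.complex.X 1, P.complex.X 0, (P.complex.d 2 1).hom, (P.complex.d 1 0).hom,
    (P.π.f 0).hom, ?_, ?_, ?_, ?_, ?_⟩
  · have : Projective (P.complex.X 0) := P.projective 0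
    have : Module.Projective R (P.complex.X 0) := (IsProjective.iff_projective _).mpr this
    infer_instance
  · exact (ShortComplex.ShortExact.moduleCat_exact_iff_function_exact _).mp (P.exact_succ 0)
  · exact (ShortComplex.ShortExact.moduleCat_exact_iff_function_exact _).mp P.exact₀
  · exact (ModuleCat.epi_iff_surjective (P.π.f 0)).mp inferInstance
  · intro N _ _ s
    let K := (((MonoidalCategory.tensoringLeft (ModuleCat.{u} R)).obj (ModuleCat.of R N)).mapHomologicalComplex _).obj P.complex
    have i1 : ((Tor (ModuleCat.{u} R) 1).obj (ModuleCat.of R N)).obj (ModuleCat.of R F) ≅ (K.sc' 2 1 0).homology :=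
      P.isoLeftDerivedObj _ 1 ≪≫ K.homologyIsoSc' 2 1 0 (by simp) (by simp)
    have e := i1.toLinearEquiv
    have h1 : (∀ x : ((Tor (ModuleCat.{u} R) 1).obj (ModuleCat.of R N)).obj (ModuleCat.of R F), s • x = 0) ↔ ∀ x : (K.sc' 2 1 0).homology, s • x = 0 := kill_congr e s
    rw [h1, sc_kill]
    rfl

/-- Equational form of almost flatness. -/
def AF {R : Type u} [CommRing R] (m : Ideal R) (F : Type u) [AddCommGroup F] [Module R F] : Prop :=
  ∀ (n : ℕ) (a : Fin n → R) (y : Fin n → F), ∑ i, a i • y i = 0 → ∀ s ∈ m,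
    ∃ (k : ℕ) (c : Fin k → Fin n → R) (z : Fin k → F),
      (∀ j, ∑ i, a i * c j i = 0) ∧ ∀ i, s • y i = ∑ j, c j i • z j

/-- The submodule of `F ^ n` generated by the `c • z` with `c ∈ K`. -/
def SS {R : Type u} [CommRing R] {n : ℕ} (K : Submodule R (Fin n → R)) (F : Type u)
    [AddCommGroup F] [Module R F] : Submodule R (Fin n → F) :=
  Submodule.span R {y | ∃ c ∈ K, ∃ z : F, y = fun i => c i • z}

lemma mem_SS {R : Type u} [CommRing R] {n : ℕ} {K : Submodule R (Fin n → R)} {F : Type u}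
    [AddCommGroup F] [Module R F] {y : Fin n → F} : y ∈ SS K F ↔
    ∃ (k : ℕ) (c : Fin k → Fin n → R) (z : Fin k → F),
      (∀ j, c j ∈ K) ∧ ∀ i, y i = ∑ j, c j i • z j := by
  constructor
  · intro h
    induction h using Submodule.span_induction with
    | mem x h =>
      obtain ⟨c, hc, z, rfl⟩ := h
      exact ⟨1, fun _ => c, fun _ => z, fun _ => hc, by simp⟩
    | zero => exact ⟨0, Fin.elim0, Fin.elim0, fun j => j.elim0, by simp⟩
    | add x y _ _ hx hy =>
      obtain ⟨k, c, z, h1, h2⟩ := hx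
      obtain ⟨k', c', z', h1', h2'⟩ := hy
      refine ⟨k + k', Fin.append c c', Fin.append z z', fun j => ?_, fun i => ?_⟩
      · refine Fin.addCases (fun j => ?_) (fun j => ?_) j
        · simpa using h1 j
        · simpa using h1' j
      · simp [Fin.sum_univ_add, h2, h2']
    | smul r x _ hx =>
      obtain ⟨k, c, z, h1, h2⟩ := hx
      refine ⟨k, fun j => r • c j, z, fun j => K.smul_mem _ (h1 j), fun i => ?_⟩
      simp [h2, Finset.smul_sum, mul_smul]
  · rintro ⟨k, c, z, h1, h2⟩
    have : y = ∑ j, fun i => c j i • z j := by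
      ext i; simp [h2]
    rw [this]
    exact Submodule.sum_mem _ fun j _ => Submodule.subset_span ⟨c j, h1 j, z j, rfl⟩

/-- Idempotence: it is enough to test on products. -/
lemma idem_smul_mem {R : Type u} [CommRing R] {m : Ideal R} (hm : m * m = m) {A : Type*}
    [AddCommGroup A] [Module R A] (S : Submodule R A) (y : A)
    (h : ∀ s ∈ m, ∀ t ∈ m, (s * t) • y ∈ S) : ∀ s ∈ m, s • y ∈ S := by
  intro s hs
  have : m * m ≤ Submodule.comap (LinearMap.toSpanSingleton R A y) S := by
    rw [Ideal.mul_le]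
    intro r hr s hs
    simpa using h r hr s hs
  rw [hm] at this
  simpa using this hs

/-- kernel of a row -/
def KK {R : Type u} [CommRing R] {n : ℕ} (a : Fin n → R) : Submodule R (Fin n → R) where
  carrier := {c | ∑ i, a i * c i = 0}
  add_mem' := by
    intro x y hx hy
    simp only [Set.mem_ofPred_eq] at *
    simp [mul_add, Finset.sum_add_distrib, hx, hy]
  zero_mem' := by simp
  smul_mem' := by
    intro r x hx
    simp only [Set.mem_ofPred_eq] at *
    simp [mul_left_comm, ← Finset.mul_sum, hx]

lemma mem_KK {R : Type u} [CommRing R] {n : ℕ} {a c : Fin n → R} :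
    c ∈ KK a ↔ ∑ i, a i * c i = 0 := Iff.rfl

lemma AF_iff_s11 {R : Type u} [CommRing R] {m : Ideal R} {F : Type u} [AddCommGroup F] [Module R F] :
    AF m F ↔ ∀ (n : ℕ) (a : Fin n → R) (y : Fin n → F), ∑ i, a i • y i = 0 → ∀ s ∈ m,
      s • y ∈ SS (KK a) F := by
  simp only [mem_SS, AF, mem_KK, Pi.smul_apply]

/-- The matrix version. -/
lemma AF.matrix {R : Type u} [CommRing R] {m : Ideal R} (hm : m * m = m) {F : Type u}
    [AddCommGroup F] [Module R F] (h : AF m F) (r n : ℕ) (A : Fin r → Fin n → R)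
    (y : Fin n → F) (hy : ∀ k, ∑ i, A k i • y i = 0) :
    ∀ s ∈ m, s • y ∈ SS (⨅ k, KK (A k)) F := by
  induction r with
  | zero =>
    intro s _
    refine mem_SS.2 ⟨n, fun j => Pi.single j 1, fun j => s • y j, by simp, fun i => ?_⟩
    simp [Pi.single_apply]
  | succ r ih =>
    refine idem_smul_mem hm _ _ fun t ht s hs => ?_
    obtain ⟨k, C, z, hC, hz⟩ := mem_SS.1 (ih (fun k => A k.succ) (fun k => hy k.succ) s hs)
    have hz0 : ∑ j, (∑ i, A 0 i * C j i) • z j = 0 := by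
      have : s • ∑ i, A 0 i • y i = 0 := by rw [hy, smul_zero]
      rw [Finset.smul_sum] at this
      simp_rw [smul_comm s, ← Pi.smul_apply s y, hz, Finset.smul_sum, smul_smul] at this
      rw [Finset.sum_comm] at this
      simpa [Finset.sum_smul] using this
    obtain ⟨l, D, w, hD, hw⟩ := h k _ z hz0 t ht
    refine mem_SS.2 ⟨l, fun p => ∑ j, D p j • C j, w, fun p => ?_, fun i => ?_⟩
    · rw [Submodule.mem_iInf]
      intro q
      refine Fin.cases ?_ (fun q => ?_) q
      · rw [mem_KK, ← hD p]
        simp only [Finset.sum_apply, Pi.smul_apply, smul_eq_mul, Finset.mul_sum, Finset.sum_mul]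
        rw [Finset.sum_comm]
        refine Finset.sum_congr rfl fun _ _ => Finset.sum_congr rfl fun _ _ => by ring
      · exact Submodule.sum_mem _ fun j _ => Submodule.smul_mem _ _ ((Submodule.mem_iInf _).1 (hC j) q)
    · have := hz i
      rw [mul_smul, Pi.smul_apply, this, Finset.smul_sum]
      simp_rw [smul_comm t, hw, Finset.smul_sum]
      rw [Finset.sum_comm]
      simp [Finset.sum_smul, smul_smul, mul_comm]

lemma flat_vanish {R : Type u} [CommRing R] {N P : Type u} [AddCommGroup N] [Module R N]
    [AddCommGroup P] [Module R P] [Module.Flat R P] {l : ℕ} (x : Fin l → N) (p : Fin l → P)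
    (h : ∑ i, x i ⊗ₜ[R] p i = 0) :
    ∃ (k : ℕ) (b : Fin l → Fin k → R) (q : Fin k → P), (∀ i, p i = ∑ j, b i j • q j) ∧
      ∀ j, ∑ i, b i j • x i = 0 := by
  exact TensorProduct.vanishesTrivially_of_sum_tmul_eq_zero_of_rTensor_injective R
    (Module.Flat.rTensor_preserves_injective_linearMap _ (Submodule.injective_subtype _)) h

lemma exists_fin_tmul {R : Type u} [CommRing R] {N P : Type u} [AddCommGroup N] [Module R N]
    [AddCommGroup P] [Module R P] (x : N ⊗[R] P) :
    ∃ (l : ℕ) (n : Fin l → N) (p : Fin l → P), x = ∑ i, n i ⊗ₜ[R] p i := by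
  induction x with
  | zero => exact ⟨0, Fin.elim0, Fin.elim0, by simp⟩
  | tmul n p => exact ⟨1, fun _ => n, fun _ => p, by simp⟩
  | add x y hx hy =>
    obtain ⟨k, c, z, rfl⟩ := hx
    obtain ⟨k', c', z', rfl⟩ := hy
    exact ⟨k + k', Fin.append c c', Fin.append z z', by simp [Fin.sum_univ_add]⟩

lemma AF.almostFlat {R : Type u} [CommRing R] {m : Ideal R} (hm : m * m = m) {F : Type u}
    [AddCommGroup F] [Module R F] (h : AF m F) : IsAlmostFlat m F := by
  intro N _ _ s hs
  obtain ⟨P₂, P₁, P₀, d₂, d₁, e, hfl, ex1, ex0, hsurj, htor⟩ := exists_res (R := R) F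
  rw [htor]
  intro x hx
  obtain ⟨l, n, q, rfl⟩ := exists_fin_tmul x
  simp only [map_sum, LinearMap.lTensor_tmul] at hx
  obtain ⟨k, b, p, hp, hb⟩ := flat_vanish n (fun i => d₁ (q i)) hx
  have hrel : ∀ i, ∑ j, b i j • e (p j) = 0 := by
    intro i
    have := congrArg e (hp i)
    rw [ex0.apply_apply_eq_zero] at this
    simpa using this.symm
  obtain ⟨k', c, z, hc, hz⟩ := mem_SS.1 (h.matrix hm _ _ b (fun j => e (p j)) hrel s hs)
  choose z' hz' using fun j => hsurj (z j)
  have : ∀ j, ∃ r, d₁ r = s • p j - ∑ a, c a j • z' a := by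
    intro j
    apply (ex0 _).1
    have := hz j
    simp only [Pi.smul_apply] at this
    simp [hz', this]
  choose r hr using this
  have hq : ∀ i, s • d₁ (q i) = ∑ j, b i j • d₁ (r j) := by
    intro i
    simp_rw [hr, smul_sub, Finset.sum_sub_distrib, Finset.smul_sum]
    rw [Finset.sum_comm (f := fun j a => b i j • c a j • z' a)]
    have : ∀ a, ∑ j, b i j • c a j • z' a = 0 := by
      intro a
      have := mem_KK.1 ((Submodule.mem_iInf _).1 (hc a) i)
      simp_rw [smul_smul, ← Finset.sum_smul, this, zero_smul]
    simp_rw [this, Finset.sum_const_zero, sub_zero, smul_comm _ s, ← Finset.smul_sum]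
    rw [hp i]
  have : ∀ i, ∃ t, d₂ t = s • q i - ∑ j, b i j • r j := by
    intro i
    apply (ex1 _).1
    simp [hq]
  choose t ht using this
  refine ⟨∑ i, n i ⊗ₜ t i, ?_⟩
  simp only [map_sum, LinearMap.lTensor_tmul, ht, TensorProduct.tmul_sub, Finset.sum_sub_distrib,
    TensorProduct.tmul_sum, Finset.smul_sum, TensorProduct.tmul_smul]
  rw [Finset.sum_comm (f := fun i j => b i j • n i ⊗ₜ[R] r j)]
  have : ∀ j, ∑ i, b i j • n i ⊗ₜ[R] r j = 0 := by
    intro j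
    simp_rw [TensorProduct.smul_tmul', ← TensorProduct.sum_tmul, hb, TensorProduct.zero_tmul]
  simp [this]

lemma exists_sum_of_mem_span_smul {R : Type u} [CommRing R] {P : Type u} [AddCommGroup P]
    [Module R P] {n : ℕ} (a : Fin n → R) (x : P)
    (hx : x ∈ Ideal.span (Set.range a) • (⊤ : Submodule R P)) :
    ∃ g : Fin n → P, x = ∑ i, a i • g i := by
  induction hx using Submodule.smul_induction_on' with
  | smul r hr z _ =>
    obtain ⟨c, rfl⟩ := (Ideal.mem_span_range_iff_exists_fun).1 hr
    exact ⟨fun i => c i • z, by simp [Finset.sum_smul, smul_smul, mul_comm]⟩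
  | add x _ y _ hx hy =>
    obtain ⟨g, rfl⟩ := hx
    obtain ⟨g', rfl⟩ := hy
    exact ⟨fun i => g i + g' i, by simp [Finset.sum_add_distrib]⟩

lemma AF.of_almostFlat {R : Type u} [CommRing R] {m : Ideal R} {F : Type u}
    [AddCommGroup F] [Module R F] (h : IsAlmostFlat m F) : AF m F := by
  intro n a y hy s hs
  obtain ⟨P₂, P₁, P₀, d₂, d₁, e, hfl, ex1, ex0, hsurj, htor⟩ := exists_res (R := R) F
  let J : Ideal R := Ideal.span (Set.range a)
  have h1 := (htor (R ⧸ J) s).1 (h (R ⧸ J) s hs)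
  choose p hp using fun i => hsurj (y i)
  obtain ⟨q, hq⟩ := (ex0 (∑ i, a i • p i)).1 (by simp [hp, hy])
  have hz : d₁.lTensor (R ⧸ J) (1 ⊗ₜ q) = 0 := by
    rw [LinearMap.lTensor_tmul, hq, TensorProduct.tmul_sum]
    refine Finset.sum_eq_zero fun i _ => ?_
    rw [← TensorProduct.smul_tmul]
    have : a i • (1 : R ⧸ J) = 0 := by
      rw [Algebra.smul_def, mul_one]
      exact Ideal.Quotient.eq_zero_iff_mem.2 (Ideal.subset_span ⟨i, rfl⟩)
    rw [this, TensorProduct.zero_tmul]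
  obtain ⟨t, ht⟩ := h1 _ hz
  obtain ⟨t', rfl⟩ : ∃ t' : P₂, t = 1 ⊗ₜ t' := by
    obtain ⟨t', ht'⟩ := Submodule.Quotient.mk_surjective _ (TensorProduct.quotTensorEquivQuotSMul P₂ J t)
    refine ⟨t', ?_⟩
    rw [← TensorProduct.quotTensorEquivQuotSMul_symm_mk, ht', LinearEquiv.symm_apply_apply]
  rw [LinearMap.lTensor_tmul, ← TensorProduct.tmul_smul, ← sub_eq_zero, ← TensorProduct.tmul_sub] at ht
  have ht2 := congrArg (TensorProduct.quotTensorEquivQuotSMul P₁ J) ht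
  rw [TensorProduct.quotTensorEquivQuotSMul_mk_one_tmul, map_zero, Submodule.Quotient.mk_eq_zero] at ht2
  have key : ∃ g : Fin n → P₁, d₂ t' - s • q = ∑ i, a i • g i :=
    exists_sum_of_mem_span_smul a _ ht2
  obtain ⟨g, hg⟩ := key
  have hd := congrArg d₁ hg
  simp only [map_sub, map_smul, map_sum, hq, ex1.apply_apply_eq_zero, zero_sub] at hd
  have h0 : ∑ i, a i • (s • p i + d₁ (g i)) = 0 := by
    simp only [smul_add, Finset.sum_add_distrib, ← hd, Finset.smul_sum]
    simp [smul_comm s]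
  obtain ⟨k, b, w, hb, hw⟩ := flat_vanish a (fun i => s • p i + d₁ (g i)) (by
    apply (TensorProduct.lid R P₀).injective
    simpa using h0)
  refine ⟨k, fun j i => b i j, fun j => e (w j), fun j => ?_, fun i => ?_⟩
  · rw [← hw j]
    simp [mul_comm]
  · have := congrArg e (hb i)
    simpa [hp, ex0.apply_apply_eq_zero] using this

/-- Uniform almost finite generation of syzygies of finite families in `R`. -/
def CC {R : Type u} [CommRing R] (m : Ideal R) : Prop :=
  ∀ (n : ℕ) (a : Fin n → R), ∀ s ∈ m, ∃ (k : ℕ) (d : Fin k → Fin n → R),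
    (∀ j, d j ∈ KK a) ∧ ∀ x ∈ KK a, s • x ∈ Submodule.span R (Set.range d)

lemma CC.coherent {R : Type u} [CommRing R] {m : Ideal R} (h : CC m) : IsAlmostCoherent m := by
  intro I hI s hs t ht
  obtain ⟨n, f, hf⟩ := hI s hs
  have hfa : ∀ x : Fin n → R, (f x : R) = ∑ i, (f (Pi.single i 1) : R) * x i := by
    intro x
    conv_lhs => rw [← LinearMap.sum_single_apply (fun _ : Fin n => R) x]
    have : ∀ i, (Pi.single i (x i) : Fin n → R) = x i • Pi.single i 1 := by
      intro i
      rw [← Pi.single_smul', smul_eq_mul, mul_one]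
    simp [this, mul_comm]
  obtain ⟨k, d, hd, hspan⟩ := h n (fun i => (f (Pi.single i 1) : R)) t ht
  refine ⟨n, k, Fintype.linearCombination R d, f, ?_, hf, ?_⟩
  · ext j : 2
    apply Subtype.ext
    have := hd j
    rw [mem_KK, ← hfa] at this
    simpa using this
  · intro x hx
    rw [Fintype.range_linearCombination]
    apply hspan
    rw [mem_KK, ← hfa, LinearMap.mem_ker.1 hx]
    rfl

lemma CC.of_coherent {R : Type u} [CommRing R] {m : Ideal R} (hm : m * m = m)
    (h : IsAlmostCoherent m) : CC m := by
  intro n a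
  -- the set of good `s` is an ideal
  suffices H : ∀ s ∈ m, ∀ t ∈ m, ∃ (k : ℕ) (d : Fin k → Fin n → R),
      (∀ j, d j ∈ KK a) ∧ ∀ x ∈ KK a, (s * t) • x ∈ Submodule.span R (Set.range d) by
    intro s hs
    rw [← hm] at hs
    induction hs using Submodule.mul_induction_on' with
    | mem_mul_mem s hs t ht => exact H s hs t ht
    | add x _ y _ hx hy =>
      obtain ⟨k, d, hd, hs⟩ := hx
      obtain ⟨k', d', hd', hs'⟩ := hy
      refine ⟨k + k', Fin.append d d', fun j => ?_, fun x hx => ?_⟩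
      · refine Fin.addCases (fun j => ?_) (fun j => ?_) j
        · simpa using hd j
        · simpa using hd' j
      · rw [add_smul]
        refine add_mem (Submodule.span_mono ?_ (hs x hx)) (Submodule.span_mono ?_ (hs' x hx))
        · rintro _ ⟨j, rfl⟩
          exact ⟨Fin.castAdd k' j, by simp⟩
        · rintro _ ⟨j, rfl⟩
          exact ⟨Fin.natAdd k j, by simp⟩
  intro s hs t ht
  let J : Ideal R := Ideal.span (Set.range a)
  have hJ : ∀ y : J, ∃ c : Fin n → R, ∑ i, c i * a i = y := fun y =>
    Ideal.mem_span_range_iff_exists_fun.1 y.2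
  let α : (Fin n → R) →ₗ[R] J := Fintype.linearCombination R
    (fun i => (⟨a i, Ideal.subset_span ⟨i, rfl⟩⟩ : J))
  have hα : ∀ x, (α x : R) = ∑ i, a i * x i := by
    intro x
    simp [α, Fintype.linearCombination_apply, mul_comm]
  have hαs : Function.Surjective α := by
    intro y
    obtain ⟨c, hc⟩ := hJ y
    exact ⟨c, Subtype.ext (by rw [hα, ← hc]; simp [mul_comm])⟩
  have hαK : ∀ x, x ∈ KK a ↔ α x = 0 := by
    intro x
    rw [mem_KK, ← hα]
    simp
  obtain ⟨n', k', g', f', h0, h1, h2⟩ := h J (fun s _ => ⟨n, α, fun y => hαs _⟩) s hs t ht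
  choose φ0 hφ0 using fun i => hαs (f' (Pi.single i 1))
  let φ : (Fin n' → R) →ₗ[R] (Fin n → R) := Fintype.linearCombination R φ0
  have hφ : ∀ x, α (φ x) = f' x := by
    have : α ∘ₗ φ = f' := by
      ext i : 2
      simp [φ, hφ0]
    exact fun x => LinearMap.congr_fun this x
  choose ψ0 hψ0 using fun i => h1 (α (Pi.single i 1))
  let ψ : (Fin n → R) →ₗ[R] (Fin n' → R) := Fintype.linearCombination R ψ0
  have hψ : ∀ x, f' (ψ x) = s • α x := by
    have : f' ∘ₗ ψ = s • α := by
      ext i : 2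
      simp [ψ, hψ0]
    exact fun x => LinearMap.congr_fun this x
  let δ : (Fin n → R) →ₗ[R] (Fin n → R) := φ ∘ₗ ψ - s • LinearMap.id
  have hg' : ∀ x, f' (g' x) = 0 := fun x => LinearMap.congr_fun h0 x
  let d : Fin (k' + n) → Fin n → R := Fin.append (fun j => φ (g' (Pi.single j 1)))
    (fun i => δ (Pi.single i 1))
  have hrange : ∀ (p : ℕ) (β : (Fin p → R) →ₗ[R] (Fin n → R)) (x),
      β x ∈ Submodule.span R (Set.range fun j => β (Pi.single j 1)) := by
    intro p β x
    have : β = Fintype.linearCombination R (fun j => β (Pi.single j 1)) := by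
      ext i : 2
      simp
    rw [← Fintype.range_linearCombination, ← this]
    exact ⟨x, rfl⟩
  refine ⟨k' + n, d, fun j => ?_, fun x hx => ?_⟩
  · refine Fin.addCases (fun j => ?_) (fun j => ?_) j
    · simp only [d, Fin.append_left]
      rw [hαK, hφ, hg']
    · simp only [d, Fin.append_right]
      rw [hαK]
      simp [δ, hφ, hψ]
  · rw [hαK] at hx
    obtain ⟨z, hz⟩ := h2 (ψ x) (by rw [LinearMap.mem_ker, hψ, hx, smul_zero])
    have : (s * t) • x = φ (g' z) - t • δ x := by
      rw [hz]
      simp [δ, smul_sub, smul_smul, mul_comm]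
    rw [this]
    refine sub_mem (Submodule.span_mono ?_ (hrange _ (φ ∘ₗ g') z))
      (Submodule.smul_mem _ _ (Submodule.span_mono ?_ (hrange _ δ x)))
    · rintro _ ⟨j, rfl⟩
      exact ⟨Fin.castAdd n j, by simp [d]⟩
    · rintro _ ⟨j, rfl⟩
      exact ⟨Fin.natAdd k' j, by simp [d]⟩

lemma AF.pi {R : Type u} [CommRing R] {m : Ideal R} (hm : m * m = m) (hC : CC m) {ι : Type u}
    (F : ι → Type u) [∀ i, AddCommGroup (F i)] [∀ i, Module R (F i)] (h : ∀ i, AF m (F i)) :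
    AF m (∀ i, F i) := by
  rw [AF_iff_s11]
  intro n a y hy
  refine idem_smul_mem hm _ _ fun s hs t ht => ?_
  obtain ⟨k, d, hd, hspan⟩ := hC n a s hs
  have : ∀ x : ι, ∃ w : Fin k → F x, ∀ i, (s * t) • y i x = ∑ j, d j i • w j := by
    intro x
    obtain ⟨l, c, z, hc, hz⟩ := h x n a (fun i => y i x) (by simpa using congrFun hy x) t ht
    have : ∀ p, ∃ b : Fin k → R, ∑ j, b j • d j = s • c p := fun p =>
      (Submodule.mem_span_range_iff_exists_fun R).1 (hspan (c p) (hc p))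
    choose b hb using this
    refine ⟨fun j => ∑ p, b p j • z p, fun i => ?_⟩
    rw [mul_smul, hz, Finset.smul_sum]
    simp_rw [Finset.smul_sum]
    rw [Finset.sum_comm]
    refine Finset.sum_congr rfl fun p _ => ?_
    have := congrFun (hb p) i
    simp only [Finset.sum_apply, Pi.smul_apply, smul_eq_mul] at this
    rw [smul_smul, ← this, Finset.sum_smul]
    exact Finset.sum_congr rfl fun j _ => by rw [smul_smul, mul_comm]
  choose w hw using this
  refine mem_SS.2 ⟨k, d, fun j x => w x j, hd, fun i => ?_⟩
  ext x
  simpa using hw x i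

lemma AF.retract {R : Type u} [CommRing R] {m : Ideal R} {F G : Type u} [AddCommGroup F]
    [Module R F] [AddCommGroup G] [Module R G] (h : AF m F) (f : G →ₗ[R] F) (g : F →ₗ[R] G)
    (hgf : ∀ x, g (f x) = x) : AF m G := by
  intro n a y hy s hs
  obtain ⟨k, c, z, hc, hz⟩ := h n a (fun i => f (y i))
    (by simpa using congrArg f hy) s hs
  refine ⟨k, c, fun j => g (z j), hc, fun i => ?_⟩
  simpa [hgf] using congrArg g (hz i)

lemma AF.self {R : Type u} [CommRing R] (m : Ideal R) : AF m R := by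
  intro n a y hy s _
  refine ⟨1, fun _ i => y i, fun _ => s, fun _ => by simpa using hy, fun i => ?_⟩
  simp [mul_comm]

lemma CC.of_pow {R : Type u} [CommRing R] {m : Ideal R}
    (h : ∀ X : Type u, AF m (X → R)) : CC m := by
  intro n a s hs
  obtain ⟨k, c, z, hc, hz⟩ := h (KK a) n a (fun i x => x.1 i) (by
    ext x
    have := mem_KK.1 x.2
    simpa using this) s hs
  refine ⟨k, c, hc, fun x hx => ?_⟩
  refine (Submodule.mem_span_range_iff_exists_fun R).2 ⟨fun j => z j ⟨x, hx⟩, ?_⟩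
  ext i
  have := congrFun (hz i) ⟨x, hx⟩
  simp only [Pi.smul_apply, Finset.sum_apply] at this
  simp only [smul_eq_mul] at this
  simp [this, mul_comm]

/-- Formal terms used to generate small almost flat submodules. -/
inductive Trm (R M : Type u) : Type u
  | base : M → Trm R M
  | add : Trm R M → Trm R M → Trm R M
  | smul : R → Trm R M → Trm R M
  | op (n : ℕ) (a : Fin n → R) (s : R) (y : Fin n → Trm R M) (j : ℕ) : Trm R M

open Classical in
/-- A function choosing witnesses. -/
noncomputable def wit {R : Type u} [CommRing R] {F : Type u} [AddCommGroup F] [Module R F]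
    (n : ℕ) (a : Fin n → R) (s : R) (y : Fin n → F) (j : ℕ) : F :=
  if h : ∃ (k : ℕ) (c : Fin k → Fin n → R) (z : ℕ → F),
      (∀ j, ∑ i, a i * c j i = 0) ∧ ∀ i, s • y i = ∑ j, c j i • z j
  then h.choose_spec.choose_spec.choose j else 0

lemma wit_spec {R : Type u} [CommRing R] {m : Ideal R} {F : Type u} [AddCommGroup F] [Module R F]
    (hF : AF m F) (n : ℕ) (a : Fin n → R) (s : R) (hs : s ∈ m) (y : Fin n → F)
    (hy : ∑ i, a i • y i = 0) :
    ∃ (k : ℕ) (c : Fin k → Fin n → R),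
      (∀ j, ∑ i, a i * c j i = 0) ∧ ∀ i, s • y i = ∑ j, c j i • wit n a s y j := by
  have h : ∃ (k : ℕ) (c : Fin k → Fin n → R) (z : ℕ → F),
      (∀ j, ∑ i, a i * c j i = 0) ∧ ∀ i, s • y i = ∑ j, c j i • z j := by
    obtain ⟨k, c, z, hc, hz⟩ := hF n a y hy s hs
    refine ⟨k, c, fun j => if h : j < k then z ⟨j, h⟩ else 0, hc, fun i => ?_⟩
    simpa using hz i
  refine ⟨h.choose, h.choose_spec.choose, h.choose_spec.choose_spec.choose_spec.1, ?_⟩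
  have e : ∀ j, wit n a s y j = h.choose_spec.choose_spec.choose j := fun j => by
    rw [wit, dif_pos h]
  simp_rw [e]
  exact h.choose_spec.choose_spec.choose_spec.2

/-- Evaluation of terms. -/
noncomputable def Trm.eval {R M : Type u} [CommRing R] {F : Type u} [AddCommGroup F] [Module R F]
    (g : M → F) : Trm R M → F
  | base x => g x
  | add x y => x.eval g + y.eval g
  | smul r x => r • x.eval g
  | op n a s y j => wit n a s (fun i => (y i).eval g) j

lemma exists_small {R : Type u} [CommRing R] {m : Ideal R} {M F : Type u} [AddCommGroup M]
    [Module R M] [AddCommGroup F] [Module R F] (hF : AF m F) (g : M →ₗ[R] F) :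
    ∃ (Q : Submodule R (Trm R M →₀ R)) (g' : M →ₗ[R] ((Trm R M →₀ R) ⧸ Q))
      (h : ((Trm R M →₀ R) ⧸ Q) →ₗ[R] F), AF m ((Trm R M →₀ R) ⧸ Q) ∧ g = h ∘ₗ g' := by
  let φ : (Trm R M →₀ R) →ₗ[R] F := Finsupp.linearCombination R (Trm.eval g)
  have hev : ∀ t : Trm R M, Trm.eval g t ∈ LinearMap.range φ := fun t : Trm R M => ⟨Finsupp.single t 1, by simp [φ]⟩
  have hφ : ∀ x, ∃ t : Trm R M, Trm.eval g t = φ x := by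
    intro x
    induction x using Finsupp.induction_linear with
    | zero => exact ⟨.smul 0 (.base 0), by simp [Trm.eval]⟩
    | add x y hx hy =>
      obtain ⟨a, ha⟩ := hx
      obtain ⟨b, hb⟩ := hy
      exact ⟨.add a b, by simp [Trm.eval, ha, hb]⟩
    | single a r => exact ⟨.smul r a, by simp [Trm.eval, φ]⟩
  let e := φ.quotKerEquivRange
  refine ⟨LinearMap.ker φ, e.symm.toLinearMap ∘ₗ g.codRestrict _ (fun x => hev (.base x)),
    (LinearMap.range φ).subtype ∘ₗ e.toLinearMap, ?_, ?_⟩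
  · have : AF m (LinearMap.range φ) := by
      intro n a y hy s hs
      choose t ht using fun i => (show ∃ t : Trm R M, Trm.eval g t = (y i : F) by
        obtain ⟨x, hx⟩ := (y i).2
        rw [← hx]
        exact hφ x)
      obtain ⟨k, c, hc, hz⟩ := wit_spec hF n a s hs (fun i => (t i).eval g) (by
        simpa [ht] using congrArg Subtype.val hy)
      refine ⟨k, c, fun j => ⟨_, hev (.op n a s t j)⟩, hc, fun i => Subtype.ext ?_⟩
      have := hz i
      rw [ht] at this
      simpa [Trm.eval] using this
    exact this.retract e.toLinearMap e.symm.toLinearMap (by simp)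
  · ext x
    simp
    rfl

/-- The set indexing the small almost flat targets. -/
structure Idx {R : Type u} [CommRing R] (m : Ideal R) (M : Type u) [AddCommGroup M] [Module R M] :
    Type u where
  Q : Submodule R (Trm R M →₀ R)
  g : M →ₗ[R] ((Trm R M →₀ R) ⧸ Q)
  h : AF m ((Trm R M →₀ R) ⧸ Q)

/-- The module attached to an index. -/
def Idx.T {R : Type u} [CommRing R] {m : Ideal R} {M : Type u} [AddCommGroup M] [Module R M]
    (i : Idx m M) : Type u := (Trm R M →₀ R) ⧸ i.Q

noncomputable instance {R : Type u} [CommRing R] {m : Ideal R} {M : Type u} [AddCommGroup M]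
    [Module R M] (i : Idx m M) : AddCommGroup i.T :=
  inferInstanceAs (AddCommGroup ((Trm R M →₀ R) ⧸ i.Q))

noncomputable instance {R : Type u} [CommRing R] {m : Ideal R} {M : Type u} [AddCommGroup M]
    [Module R M] (i : Idx m M) : Module R i.T :=
  inferInstanceAs (Module R ((Trm R M →₀ R) ⧸ i.Q))

/-- The structure map attached to an index. -/
def Idx.map {R : Type u} [CommRing R] {m : Ideal R} {M : Type u} [AddCommGroup M] [Module R M]
    (i : Idx m M) : M →ₗ[R] i.T := i.g

lemma Idx.af {R : Type u} [CommRing R] {m : Ideal R} {M : Type u} [AddCommGroup M] [Module R M]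
    (i : Idx m M) : AF m i.T := i.h

end Aux

/-- `R` is almost coherent iff every module has an almost flat
preenvelope. -/
theorem almostCoherent_iff_almostFlat_preenvelope
    {R : Type u} [CommRing R] (m : Ideal R) (hm : m * m = m) :
    IsAlmostCoherent m ↔
      (∀ (M : Type u) [AddCommGroup M] [Module R M],
        ∃ (F : ModuleCat.{u} R) (f : M →ₗ[R] F), IsAlmostFlat m F ∧
          ∀ (F' : Type u) [AddCommGroup F'] [Module R F'], IsAlmostFlat m F' →
            ∀ g : M →ₗ[R] F', ∃ h : (F : Type u) →ₗ[R] F', g = h ∘ₗ f) := by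
  constructor
  · intro hco M _ _
    have hC := CC.of_coherent hm hco
    refine ⟨ModuleCat.of R (∀ i : Idx m M, i.T), LinearMap.pi fun i : Idx m M => i.map,
      (AF.pi hm hC _ fun i : Idx m M => i.af).almostFlat hm, ?_⟩
    intro F' _ _ hF' g
    obtain ⟨Q, g', h, hQ, hg⟩ := exists_small (AF.of_almostFlat hF') g
    let i : Idx m M := ⟨Q, g', hQ⟩
    let h' : i.T →ₗ[R] F' := h
    refine ⟨h' ∘ₗ LinearMap.proj i, ?_⟩
    rw [hg]
    rfl
  · intro H
    refine CC.coherent (CC.of_pow fun X => ?_)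
    obtain ⟨F, f, hF, hpre⟩ := H (X → R)
    choose h hh using fun x : X => hpre R ((AF.self m).almostFlat hm) (LinearMap.proj x)
    refine (AF.of_almostFlat hF).retract f (LinearMap.pi h) fun y => ?_
    ext x
    exact (LinearMap.congr_fun (hh x) y).symm
end

section
/- For an R-module E, the following are equivalent: (1) E is almost absolutely pure; (2) every short exact sequence of R-modules of the form 0 → E → B → C → 0 is almost pure; (3) for every injective R-module I containing E as a submodule, the short exact sequence 0 → E → I → I/E → 0 is almost pure; (4) for every finitely generated projective R-module P, every finitely generated submodule K ⊆ P with inclusion i : K → P, every R-linear map f : K → E, and every s ∈ m, there exists an R-linear map g : P → E with g ∘ i = s·f. -/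
universe u

open CategoryTheory

/-- A module `E` is almost absolutely pure if `Ext¹ᴿ(N, E)` is almost zero for every
finitely presented module `N`. -/
def IsAlmostAbsolutelyPure {R : Type u} [CommRing R] (m : Ideal R)
    (E : Type u) [AddCommGroup E] [Module R E] : Prop :=
  ∀ (N : Type u) [AddCommGroup N] [Module R N], Module.FinitePresentation R N →
    ∀ s ∈ m, ∀ x : ((Ext R (ModuleCat.{u} R) 1).obj
        (Opposite.op (ModuleCat.of R N))).obj (ModuleCat.of R E),
      s • x = 0

lemma sc_homology_iff {R : Type u} [CommRing R] (S : ShortComplex (ModuleCat.{u} R)) (s : R) :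
    (∀ x : S.homology, s • x = 0) ↔
      ∀ z : S.X₂, S.g z = 0 → ∃ y : S.X₁, S.f y = s • z := by
  have e : S.homology ≃ₗ[R] (LinearMap.ker S.g.hom ⧸ LinearMap.range S.moduleCatToCycles) :=
    S.moduleCatHomologyIso.toLinearEquiv
  have h1 : (∀ x : S.homology, s • x = 0) ↔
      ∀ x : (LinearMap.ker S.g.hom ⧸ LinearMap.range S.moduleCatToCycles), s • x = 0 := by
    constructor
    · intro h x
      have := h (e.symm x)
      rw [← map_smul] at this
      exact (LinearEquiv.map_eq_zero_iff _).1 this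
    · intro h x
      have := h (e x)
      have h2 : e (s • x) = 0 := by rw [map_smul]; exact this
      exact (LinearEquiv.map_eq_zero_iff _).1 h2
  rw [h1]
  constructor
  · intro h z hz
    have := h (Submodule.Quotient.mk ⟨z, hz⟩)
    rw [← Submodule.Quotient.mk_smul, Submodule.Quotient.mk_eq_zero] at this
    obtain ⟨y, hy⟩ := this
    exact ⟨y, congrArg Subtype.val hy⟩
  · intro h x
    obtain ⟨⟨z, hz⟩, rfl⟩ := Submodule.Quotient.mk_surjective _ x
    rw [← Submodule.Quotient.mk_smul, Submodule.Quotient.mk_eq_zero]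
    obtain ⟨y, hy⟩ := h z hz
    exact ⟨y, Subtype.ext hy⟩

lemma cc_homology_iff {R : Type u} [CommRing R] (K : CochainComplex (ModuleCat.{u} R) ℕ) (s : R) :
    (∀ x : K.homology 1, s • x = 0) ↔
      ∀ z : K.X 1, K.d 1 2 z = 0 → ∃ y : K.X 0, K.d 0 1 y = s • z := by
  have i := (K.homologyIsoSc' 0 1 2 (by simp) (by simp)).toLinearEquiv
  have := sc_homology_iff (K.sc' 0 1 2) s
  refine Iff.trans ?_ this
  constructor
  · intro h x
    have := h (i.symm x)
    rw [← map_smul] at this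
    exact (LinearEquiv.map_eq_zero_iff _).1 this
  · intro h x
    have := h (i x)
    rw [← map_smul] at this
    exact (LinearEquiv.map_eq_zero_iff _).1 this

lemma ext_iff_res {R : Type u} [CommRing R] (N E : ModuleCat.{u} R) (P : ProjectiveResolution N) (s : R) :
    (∀ x : ((Ext R (ModuleCat.{u} R) 1).obj (Opposite.op N)).obj E, s • x = 0) ↔
      ∀ z : P.complex.X 1 ⟶ E, P.complex.d 2 1 ≫ z = 0 →
        ∃ y : P.complex.X 0 ⟶ E, P.complex.d 1 0 ≫ y = s • z := by
  have i := (P.isoExt (R := R) 1 E).toLinearEquiv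
  have := cc_homology_iff (P.complex.linearYonedaObj R E) s
  refine Iff.trans ?_ this
  constructor
  · intro h x
    have := h (i.symm x)
    rw [← map_smul] at this
    exact (LinearEquiv.map_eq_zero_iff _).1 this
  · intro h x
    have := h (i x)
    rw [← map_smul] at this
    exact (LinearEquiv.map_eq_zero_iff _).1 this

/-- extension property -/
def ExtProp {R : Type u} [CommRing R] (E : Type u) [AddCommGroup E] [Module R E] (s : R)
    {P N : Type u} [AddCommGroup P] [Module R P] [AddCommGroup N] [Module R N] (p : P →ₗ[R] N) : Prop :=
  ∀ f : LinearMap.ker p →ₗ[R] E, ∃ g : P →ₗ[R] E, g ∘ₗ (LinearMap.ker p).subtype = s • f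

lemma ExtProp.transfer {R : Type u} [CommRing R] {E : Type u} [AddCommGroup E] [Module R E] {s : R}
    {P P' N : Type u} [AddCommGroup P] [Module R P] [AddCommGroup P'] [Module R P']
    [AddCommGroup N] [Module R N] [Module.Projective R P] [Module.Projective R P']
    {p : P →ₗ[R] N} {p' : P' →ₗ[R] N} (hp : Function.Surjective p) (hp' : Function.Surjective p')
    (h : ExtProp E s p') : ExtProp E s p := by
  intro f
  obtain ⟨α, hα⟩ := Module.projective_lifting_property p' p hp'
  obtain ⟨β, hβ⟩ := Module.projective_lifting_property p p' hp
  have hα' (x) : p' (α x) = p x := LinearMap.congr_fun hα x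
  have hβ' (x) : p (β x) = p' x := LinearMap.congr_fun hβ x
  let β' : LinearMap.ker p' →ₗ[R] LinearMap.ker p :=
    β.restrict (fun x hx => by simpa [hβ'] using hx)
  obtain ⟨g', hg'⟩ := h (f ∘ₗ β')
  let δ : P →ₗ[R] LinearMap.ker p :=
    (LinearMap.id - β ∘ₗ α).codRestrict _ (fun x => by simp [hα', hβ'])
  refine ⟨g' ∘ₗ α + s • (f ∘ₗ δ), ?_⟩
  ext ⟨k, hk⟩
  have hk' : α k ∈ LinearMap.ker p' := by simpa [hα'] using hk
  have h2 : g' (α k) = s • f (β' ⟨α k, hk'⟩) := LinearMap.congr_fun hg' ⟨α k, hk'⟩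
  simp only [LinearMap.comp_apply, LinearMap.add_apply, LinearMap.smul_apply, Submodule.subtype_apply]
  rw [h2, ← smul_add, ← map_add]
  congr 2
  ext
  simp [β', δ]

lemma ext_iff_res' {R : Type u} [CommRing R] (N E : ModuleCat.{u} R) (P : ProjectiveResolution N) (s : R)
    (p : P.complex.X 0 →ₗ[R] N) (hker : LinearMap.ker p = LinearMap.range (P.complex.d 1 0).hom) :
    (∀ x : ((Ext R (ModuleCat.{u} R) 1).obj (Opposite.op N)).obj E, s • x = 0) ↔
      ExtProp E s p := by
  rw [ext_iff_res N E P s]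
  have hex := P.exact_succ 0
  rw [ShortComplex.moduleCat_exact_iff] at hex
  set d := (P.complex.d 1 0).hom with hd
  constructor
  · intro h f
    let d' : P.complex.X 1 →ₗ[R] LinearMap.ker p :=
      d.codRestrict _ (fun x => by rw [hker]; exact ⟨x, rfl⟩)
    obtain ⟨y, hy⟩ := h (ModuleCat.ofHom (f ∘ₗ d')) (by
      ext x
      have : d' ((P.complex.d 2 1).hom x) = 0 := by
        ext
        have := P.complex.d_comp_d 2 1 0
        exact congrArg (fun f => f.hom x) this
      simp [this])
    refine ⟨y.hom, ?_⟩
    ext ⟨k, hk⟩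
    obtain ⟨x, rfl⟩ : k ∈ LinearMap.range d := by rwa [hker] at hk
    exact congrArg (fun f => f.hom x) hy
  · intro h z hz
    have hle : LinearMap.ker d ≤ LinearMap.ker z.hom := by
      intro x hx
      obtain ⟨w, hw⟩ := hex x hx
      have := congrArg (fun f => f.hom w) hz
      change z.hom x = 0
      rw [← hw]
      exact this
    have hs : Function.Surjective d.rangeRestrict := d.surjective_rangeRestrict
    let f0 : LinearMap.range d →ₗ[R] E :=
      (LinearMap.ker d).liftQ z.hom hle ∘ₗ d.quotKerEquivRange.symm.toLinearMap
    have hf0 (x) (hx) : f0 ⟨d x, hx⟩ = z.hom x := by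
      have : d.quotKerEquivRange.symm ⟨d x, hx⟩ = Submodule.Quotient.mk x := by
        rw [LinearEquiv.symm_apply_eq]; rfl
      simp [f0, this]
    obtain ⟨g, hg⟩ := h (f0 ∘ₗ (LinearEquiv.ofEq _ _ hker).toLinearMap)
    refine ⟨ModuleCat.ofHom g, ?_⟩
    ext x
    have := LinearMap.congr_fun hg ⟨d x, by rw [hker]; exact ⟨x, rfl⟩⟩
    simp only [LinearMap.comp_apply, LinearMap.smul_apply] at this
    refine this.trans ?_
    refine congrArg (s • ·) (hf0 x ⟨x, rfl⟩)

lemma ext_iff_extProp {R : Type u} [CommRing R] (N E : Type u) [AddCommGroup N] [Module R N]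
    [AddCommGroup E] [Module R E] (s : R) {P : Type u} [AddCommGroup P] [Module R P]
    [Module.Projective R P] (p : P →ₗ[R] N) (hp : Function.Surjective p) :
    (∀ x : ((Ext R (ModuleCat.{u} R) 1).obj (Opposite.op (ModuleCat.of R N))).obj
      (ModuleCat.of R E), s • x = 0) ↔ ExtProp E s p := by
  let Q := projectiveResolution (ModuleCat.of R N)
  let q : Q.complex.X 0 ⟶ ModuleCat.of R N := Q.π.f 0
  have hq : Function.Surjective q.hom := by
    have : Epi q := inferInstanceAs (Epi (Q.π.f 0))
    exact (ModuleCat.epi_iff_surjective q).1 this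
  have hex : (ShortComplex.mk (Q.complex.d 1 0) q Q.complex_d_comp_π_f_zero).Exact :=
    ShortComplex.exact_of_g_is_cokernel _ Q.isColimitCokernelCofork
  have hker : LinearMap.ker q.hom = LinearMap.range (Q.complex.d 1 0).hom :=
    hex.moduleCat_range_eq_ker.symm
  have : Module.Projective R (Q.complex.X 0) :=
    (IsProjective.iff_projective (R := R) (Q.complex.X 0)).2 (Q.projective 0)
  rw [ext_iff_res' _ _ Q s q.hom hker]
  exact ⟨fun h => h.transfer hp hq, fun h => h.transfer hq hp⟩

/-- Condition (4). -/
def Cond4 {R : Type u} [CommRing R] (m : Ideal R)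
    (E : Type u) [AddCommGroup E] [Module R E] : Prop :=
  ∀ (P : Type u) [AddCommGroup P] [Module R P],
        Module.Projective R P → Module.Finite R P →
          ∀ K : Submodule R P, K.FG → ∀ f : K →ₗ[R] E, ∀ s ∈ m,
            ∃ g : P →ₗ[R] E, g ∘ₗ K.subtype = s • f

lemma one_iff_four {R : Type u} [CommRing R] (m : Ideal R)
    (E : Type u) [AddCommGroup E] [Module R E] : IsAlmostAbsolutelyPure m E ↔ Cond4 m E := by
  constructor
  · intro h P _ _ _ _ K hK f s hs
    have hfp : Module.FinitePresentation R P := Module.finitePresentation_of_projective R P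
    have hN : Module.FinitePresentation R (P ⧸ K) :=
      Module.finitePresentation_of_surjective K.mkQ K.mkQ_surjective (by simpa using hK)
    have h1 := (ext_iff_extProp (P ⧸ K) E s K.mkQ K.mkQ_surjective).1 (h _ hN s hs)
    have hk : LinearMap.ker K.mkQ = K := by simp
    obtain ⟨g, hg⟩ := h1 (f ∘ₗ (LinearEquiv.ofEq _ _ hk).toLinearMap)
    refine ⟨g, ?_⟩
    ext ⟨x, hx⟩
    exact LinearMap.congr_fun hg ⟨x, by rwa [hk]⟩
  · intro h N _ _ hN s hs
    obtain ⟨n, p, hp⟩ := Module.Finite.exists_fin' R N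
    rw [ext_iff_extProp N E s p hp]
    intro f
    exact h _ inferInstance inferInstance _ (Module.FinitePresentation.fg_ker p hp) f s hs

open TensorProduct in
lemma four_pure {R : Type u} [CommRing R] {m : Ideal R}
    {E : Type u} [AddCommGroup E] [Module R E] (h : Cond4 m E)
    {B : Type u} [AddCommGroup B] [Module R B] (e : E →ₗ[R] B) (he : Function.Injective e) :
    IsAlmostPure m e := by
  intro M _ _ s hs x hx
  rw [LinearMap.mem_ker] at hx
  -- reduce to a finitely generated submodule
  obtain ⟨M₁, hM₁, x₁, rfl⟩ := Submodule.exists_fg_le_eq_rTensor_subtype x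
  have hx1 : LinearMap.rTensor B M₁.subtype (LinearMap.lTensor M₁ e x₁) = 0 := by
    rw [← hx, ← LinearMap.comp_apply, ← LinearMap.comp_apply, LinearMap.rTensor_comp_lTensor,
      LinearMap.lTensor_comp_rTensor]
  obtain ⟨Q, hQ, hQfg, hx2⟩ := TensorProduct.eq_zero_of_fg_of_subtype_eq_zero hM₁ hx1
  set x₂ := LinearMap.rTensor E (Submodule.inclusion hQ) x₁ with hx₂
  have hx3 : LinearMap.lTensor Q e x₂ = 0 := by
    rw [← hx2, hx₂, ← LinearMap.comp_apply, ← LinearMap.comp_apply, LinearMap.rTensor_comp_lTensor,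
      LinearMap.lTensor_comp_rTensor]
  have hx4 : LinearMap.rTensor E M₁.subtype x₁ = LinearMap.rTensor E Q.subtype x₂ := by
    rw [hx₂, ← LinearMap.comp_apply, ← LinearMap.rTensor_comp]
    rfl
  rw [hx4, ← map_smul]
  suffices s • x₂ = 0 by rw [this, map_zero]
  clear_value x₂
  have : Module.Finite R Q := Module.Finite.of_fg hQfg
  obtain ⟨n, q, hq⟩ := Module.Finite.exists_fin' R Q
  obtain ⟨y, rfl⟩ := LinearMap.rTensor_surjective E hq x₂
  let a : Fin n → E := TensorProduct.piScalarRight R R E (Fin n) (TensorProduct.comm R _ _ y)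
  have hy : y = ∑ i, (Pi.single i 1 : Fin n → R) ⊗ₜ[R] a i := by
    apply (TensorProduct.comm R _ _).injective
    apply (TensorProduct.piScalarRight R R E (Fin n)).injective
    ext j
    simp [a, Pi.single_apply]
  let c : Fin n → Q := fun i => q (Pi.single i 1)
  have hc : Submodule.span R (Set.range c) = ⊤ := by
    rw [eq_top_iff]
    rintro w -
    obtain ⟨v, rfl⟩ := hq w
    rw [pi_eq_sum_univ' v, map_sum]
    refine Submodule.sum_mem _ fun i _ => ?_
    rw [map_smul]
    exact Submodule.smul_mem _ _ (Submodule.subset_span ⟨i, by simp [c]⟩)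
  have hz : ∑ i, c i ⊗ₜ[R] e (a i) = 0 := by
    rw [← hx3, hy]; simp [c]
  have hz' : s • LinearMap.rTensor E q y = ∑ i, c i ⊗ₜ[R] (s • a i) := by
    rw [hy]; simp [c, Finset.smul_sum]
  rw [hz']
  obtain ⟨k, r, b, hb, hr⟩ := TensorProduct.vanishesTrivially_of_sum_tmul_eq_zero R hc hz
  apply TensorProduct.sum_tmul_eq_zero_of_vanishesTrivially
  let K : Submodule R (Fin k → R) := Submodule.span R (Set.range r)
  let β : (Fin k → R) →ₗ[R] B := Fintype.linearCombination R b
  have hβ (i) : β (r i) = e (a i) := by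
    refine Eq.trans ?_ (hb i).symm
    simp [β, Fintype.linearCombination_apply]
  have hK : K ≤ (LinearMap.range e).comap β := by
    rw [Submodule.span_le]
    rintro _ ⟨i, rfl⟩
    exact ⟨a i, (hβ i).symm⟩
  let f : K →ₗ[R] E := (LinearEquiv.ofInjective e he).symm.toLinearMap ∘ₗ
    (β.restrict hK)
  have hf (i) (hi) : f ⟨r i, hi⟩ = a i := by
    simp only [f, LinearMap.comp_apply, LinearEquiv.coe_coe]
    rw [LinearEquiv.symm_apply_eq]
    ext
    simp [hβ]
  obtain ⟨g, hg⟩ := h (Fin k → R) inferInstance inferInstance K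
    (Submodule.fg_span (Set.finite_range r)) f s hs
  refine ⟨k, r, fun j => g (Pi.single j 1), fun i => ?_, hr⟩
  have hi : r i ∈ K := Submodule.subset_span ⟨i, rfl⟩
  change s • a i = ∑ j, r i j • g (Pi.single j 1)
  rw [← hf i hi]
  refine (LinearMap.congr_fun hg ⟨r i, hi⟩).symm.trans ?_
  change g (r i) = _
  conv_lhs => rw [LinearMap.pi_apply_eq_sum_univ g (r i)]
  refine Finset.sum_congr rfl fun j _ => ?_
  congr 2
  ext l; simp [Pi.single_apply, eq_comm]

open TensorProduct in
lemma three_four {R : Type u} [CommRing R] {m : Ideal R}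
    {E : Type u} [AddCommGroup E] [Module R E]
    (h : ∀ (I : Type u) [AddCommGroup I] [Module R I], Module.Injective R I →
        ∀ e : E →ₗ[R] I, Function.Injective e → IsAlmostPure m e) : Cond4 m E := by
  intro P _ _ _ _ K hK f s hs
  let I : ModuleCat.{u} R := Injective.under (ModuleCat.of R E)
  have hI : Module.Injective R I := Module.injective_module_of_injective_object R I
    (inj := inferInstanceAs (Injective (Injective.under (ModuleCat.of R E))))
  let e : E →ₗ[R] I := (Injective.ι (ModuleCat.of R E)).hom
  have he : Function.Injective e :=
    (ModuleCat.mono_iff_injective (Injective.ι (ModuleCat.of R E))).1 inferInstance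
  have hpure := h I hI e he
  obtain ⟨H, hH⟩ := Module.Injective.out K.subtype K.injective_subtype (e ∘ₗ f)
  obtain ⟨n, k, hk⟩ := Submodule.fg_iff_exists_fin_generating_family.1 hK
  have hkm (i) : k i ∈ K := hk ▸ Submodule.subset_span ⟨i, rfl⟩
  obtain ⟨J, π, hπ⟩ := Module.Finite.exists_fin' R P
  obtain ⟨σ, hσ⟩ := Module.projective_lifting_property π LinearMap.id hπ
  have hσ' (x) : π (σ x) = x := LinearMap.congr_fun hσ x
  let r (i : Fin n) (j : Fin J) : R := σ (k i) j
  let col (j : Fin J) : Fin n → R := fun i => r i j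
  let ρ : (Fin J → R) →ₗ[R] (Fin n → R) := Fintype.linearCombination R col
  let a (i : Fin n) : E := f ⟨k i, hkm i⟩
  let q := (LinearMap.range ρ).mkQ
  let y : (Fin n → R) ⊗[R] E := ∑ i, Pi.single i 1 ⊗ₜ a i
  have hea (i) : e (a i) = ∑ j, r i j • H (π (Pi.single j 1)) := by
    have h1 : e (a i) = H (k i) := (hH ⟨k i, hkm i⟩).symm
    have h2 : H (k i) = (H ∘ₗ π) (σ (k i)) := by simp [hσ']
    rw [h1, h2, LinearMap.pi_apply_eq_sum_univ]
    refine Finset.sum_congr rfl fun j _ => ?_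
    simp only [LinearMap.comp_apply, r]
    congr 3
    ext l; simp [Pi.single_apply, eq_comm]
  have hq (j) : ∑ i, r i j • q (Pi.single i 1) = 0 := by
    have : ∑ i, r i j • q (Pi.single i 1) = q (col j) := by
      rw [LinearMap.pi_apply_eq_sum_univ q]
      refine Finset.sum_congr rfl fun i _ => ?_
      congr 2
      ext l; simp [Pi.single_apply, eq_comm]
    rw [this]
    refine (Submodule.Quotient.mk_eq_zero _).2 ⟨Pi.single j 1, ?_⟩
    simp [ρ]
  have hx := hpure ((Fin n → R) ⧸ LinearMap.range ρ) s hs (LinearMap.rTensor E q y) (by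
    have : LinearMap.lTensor ((Fin n → R) ⧸ LinearMap.range ρ) e (LinearMap.rTensor E q y)
        = ∑ i, q (Pi.single i 1) ⊗ₜ[R] e (a i) := by simp [y]
    rw [LinearMap.mem_ker, this]
    exact TensorProduct.sum_tmul_eq_zero_of_vanishesTrivially R ⟨J, r, _, hea, hq⟩)
  rw [← map_smul] at hx
  have hexact : Function.Exact ρ q := LinearMap.exact_map_mkQ_range ρ
  obtain ⟨w, hw⟩ := (rTensor_exact E hexact (Submodule.mkQ_surjective _) _).1 hx
  let b : Fin J → E := TensorProduct.piScalarRight R R E (Fin J) (TensorProduct.comm R _ _ w)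
  have hb : w = ∑ j, (Pi.single j 1 : Fin J → R) ⊗ₜ[R] b j := by
    apply (TensorProduct.comm R _ _).injective
    apply (TensorProduct.piScalarRight R R E (Fin J)).injective
    ext j
    simp [b, Pi.single_apply]
  have hab (i) : s • a i = ∑ j, r i j • b j := by
    have := congrArg (fun t => TensorProduct.piScalarRight R R E (Fin n)
      (TensorProduct.comm R _ _ t) i) hw
    rw [hb] at this
    simpa [y, ρ, col, Pi.single_apply] using this.symm
  refine ⟨Fintype.linearCombination R b ∘ₗ σ, ?_⟩
  let G : P →ₗ[R] E := Fintype.linearCombination R b ∘ₗ σ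
  have hspan : Submodule.span R (Set.range fun i => (⟨k i, hkm i⟩ : K)) = ⊤ := by
    apply Submodule.map_injective_of_injective K.injective_subtype
    rw [Submodule.map_span, ← Set.range_comp, Submodule.map_subtype_top]
    exact hk
  refine LinearMap.ext_on_range hspan fun i => ?_
  simp only [LinearMap.comp_apply, LinearMap.smul_apply]
  refine Eq.trans ?_ (hab i).symm
  simp [Fintype.linearCombination_apply, r]

/-- Characterizations of almost absolutely pure modules. -/
theorem almostAbsolutelyPure_tfae
    {R : Type u} [CommRing R] (m : Ideal R) (hm : m * m = m)
    (E : Type u) [AddCommGroup E] [Module R E] :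
    -- (1) ↔ (2)
    ((IsAlmostAbsolutelyPure m E ↔
      (∀ (B C : Type u) [AddCommGroup B] [Module R B] [AddCommGroup C] [Module R C],
        ∀ (e : E →ₗ[R] B) (p : B →ₗ[R] C),
          Function.Injective e → Function.Surjective p →
            LinearMap.range e = LinearMap.ker p → IsAlmostPure m e)) ∧
    -- (1) ↔ (3)
    (IsAlmostAbsolutelyPure m E ↔
      (∀ (I : Type u) [AddCommGroup I] [Module R I], Module.Injective R I →
        ∀ e : E →ₗ[R] I, Function.Injective e → IsAlmostPure m e)) ∧
    -- (1) ↔ (4)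
    (IsAlmostAbsolutelyPure m E ↔
      (∀ (P : Type u) [AddCommGroup P] [Module R P],
        Module.Projective R P → Module.Finite R P →
          ∀ K : Submodule R P, K.FG → ∀ f : K →ₗ[R] E, ∀ s ∈ m,
            ∃ g : P →ₗ[R] E, g ∘ₗ K.subtype = s • f))) := by
  have h41 := one_iff_four m E
  have h43 : Cond4 m E → _ := fun h =>
    fun (I : Type u) [AddCommGroup I] [Module R I] (_ : Module.Injective R I)
      (e : E →ₗ[R] I) (he : Function.Injective e) => four_pure h e he
  refine ⟨⟨fun h B C _ _ _ _ e p he _ _ => four_pure (h41.1 h) e he, fun h => ?_⟩,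
    ⟨fun h => h43 (h41.1 h), fun h => h41.2 (three_four h)⟩, h41⟩
  refine h41.2 (three_four fun I _ _ _ e he => ?_)
  exact h I (I ⧸ LinearMap.range e) e (LinearMap.range e).mkQ he
    (Submodule.mkQ_surjective _) (by simp)
end

section
/- For an R-module F, the following are equivalent: (1) F is almost flat; (2) for every injective R-module I, the R-module Hom_R(F, I) is almost absolutely pure; (3) for every injective cogenerator E for R-modules, Hom_R(F, E) is almost absolutely pure. -/
universe u

open CategoryTheory

open TensorProduct

namespace AFlat

/-- `s` kills `ker (N ⊗ ker π → N ⊗ P)`. -/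
def Kills {R : Type u} [CommRing R] (s : R) (N : Type u) [AddCommGroup N] [Module R N]
    {P F : Type u} [AddCommGroup P] [Module R P] [AddCommGroup F] [Module R F]
    (π : P →ₗ[R] F) : Prop :=
  ∀ y : N ⊗[R] (LinearMap.ker π), (LinearMap.ker π).subtype.lTensor N y = 0 → s • y = 0

section
variable {R : Type u} [CommRing R] {s : R}
  {N F P Q : Type u} [AddCommGroup N] [Module R N] [AddCommGroup F] [Module R F]
  [AddCommGroup P] [Module R P] [AddCommGroup Q] [Module R Q]

lemma balance (π : P →ₗ[R] F) (ρ : Q →ₗ[R] N) (hπ : Function.Surjective π)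
    (hρ : Function.Surjective ρ) [Module.Flat R P] (h : Kills s N π) : Kills s F ρ := by
  intro x hx
  obtain ⟨y, rfl⟩ := LinearMap.rTensor_surjective (LinearMap.ker ρ) hπ x
  have e1 : ((LinearMap.ker ρ).subtype.lTensor F) (π.rTensor (LinearMap.ker ρ) y)
      = π.rTensor Q ((LinearMap.ker ρ).subtype.lTensor P y) := by
    rw [← LinearMap.comp_apply, ← LinearMap.comp_apply, LinearMap.lTensor_comp_rTensor,
      LinearMap.rTensor_comp_lTensor]
  rw [e1] at hx
  obtain ⟨z, hz⟩ := ((rTensor_exact Q (LinearMap.exact_subtype_ker_map π) hπ) _).1 hx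
  -- `w`
  have hw : (LinearMap.ker π).subtype.rTensor N (ρ.lTensor (LinearMap.ker π) z) = 0 := by
    have : (LinearMap.ker π).subtype.rTensor N (ρ.lTensor (LinearMap.ker π) z)
        = ρ.lTensor P ((LinearMap.ker π).subtype.rTensor Q z) := by
      rw [← LinearMap.comp_apply, ← LinearMap.comp_apply, LinearMap.lTensor_comp_rTensor,
        LinearMap.rTensor_comp_lTensor]
    rw [this, hz]
    exact ((lTensor_exact P (LinearMap.exact_subtype_ker_map ρ) hρ) _).2 ⟨y, rfl⟩
  have hw2 : s • (ρ.lTensor (LinearMap.ker π) z) = 0 := by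
    have := h (TensorProduct.comm R _ _ (ρ.lTensor (LinearMap.ker π) z)) (by
      rw [← LinearMap.comm_comp_rTensor_comp_comm_eq]
      simp [hw])
    rw [← map_smul] at this
    exact (TensorProduct.comm R _ _).map_eq_zero_iff.1 this
  rw [← map_smul] at hw2
  obtain ⟨v, hv⟩ := ((lTensor_exact (LinearMap.ker π) (LinearMap.exact_subtype_ker_map ρ) hρ) _).1 hw2
  have e3 : s • y = (LinearMap.ker π).subtype.rTensor (LinearMap.ker ρ) v := by
    apply Module.Flat.lTensor_preserves_injective_linearMap (M := P) (LinearMap.ker ρ).subtype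
      (Submodule.subtype_injective _)
    have : (LinearMap.ker ρ).subtype.lTensor P ((LinearMap.ker π).subtype.rTensor (LinearMap.ker ρ) v)
       = (LinearMap.ker π).subtype.rTensor Q ((LinearMap.ker ρ).subtype.lTensor (LinearMap.ker π) v) := by
      rw [← LinearMap.comp_apply, ← LinearMap.comp_apply, LinearMap.lTensor_comp_rTensor,
        LinearMap.rTensor_comp_lTensor]
    rw [this, hv, map_smul, map_smul, hz]
  rw [← map_smul, e3]
  exact ((rTensor_exact (LinearMap.ker ρ) (LinearMap.exact_subtype_ker_map π) hπ) _).2 ⟨v, rfl⟩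

/-- Reduction to finitely generated relations. -/
lemma kills_of_fg
    (h : ∀ (κ : Type u) [Finite κ] (L : Submodule R (κ →₀ R)), L.FG →
      ∀ y : F ⊗[R] L, L.subtype.lTensor F y = 0 → s • y = 0)
    (ι : Type u) (L : Submodule R (ι →₀ R)) (x : F ⊗[R] L)
    (hx : L.subtype.lTensor F x = 0) : s • x = 0 := by
  classical
  obtain ⟨M, hM, hx'⟩ := TensorProduct.exists_finite_submodule_right_of_setFinite {x}
    (Set.finite_singleton x)
  obtain ⟨x', rfl⟩ := hx' rfl
  suffices hs : s • x' = 0 by rw [← map_smul, hs, map_zero]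
  obtain ⟨G, hG⟩ := hM
  set A : M →ₗ[R] (ι →₀ R) := L.subtype ∘ₗ M.subtype with hA
  have hx2 : A.lTensor F x' = 0 := by rw [hA, LinearMap.lTensor_comp]; exact hx
  have hAi : Function.Injective A := by
    rw [hA]; exact (Submodule.subtype_injective _).comp (Submodule.subtype_injective _)
  let S : Finset ι := G.biUnion fun g => (A g).support
  let r : (ι →₀ R) →ₗ[R] (S →₀ R) := Finsupp.lsubtypeDomain (S : Set ι)
  let j : (S →₀ R) →ₗ[R] (ι →₀ R) := Finsupp.lmapDomain R R Subtype.val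
  have hjr : ∀ y : M, j (r (A y)) = A y := by
    have : (j ∘ₗ r ∘ₗ A) = A := by
      apply LinearMap.ext_on hG
      intro g hg
      have hsub : (A g).support ⊆ S := Finset.subset_biUnion_of_mem (fun g => (A g).support) hg
      show j (r (A g)) = A g
      ext i
      by_cases hi : i ∈ S
      · have := Finsupp.mapDomain_apply (Subtype.val_injective) (r (A g)) (⟨i, hi⟩ : S)
        exact this
      · have h1 : (A g) i = 0 := by
          by_contra hne; exact hi (hsub (Finsupp.mem_support_iff.2 hne))
        rw [h1]
        exact Finsupp.mapDomain_of_notMem_range _ _ (by simpa using hi)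
    exact fun y => LinearMap.congr_fun this y
  let B : M →ₗ[R] (S →₀ R) := r ∘ₗ A
  have hBi : Function.Injective B := fun a b hab => hAi (by
    rw [← hjr a, ← hjr b]; exact congrArg j hab)
  have key := h S (LinearMap.range B) (by
    rw [LinearMap.range_eq_map]; exact Submodule.FG.map _ ⟨G, hG⟩)
    (B.rangeRestrict.lTensor F x') (by
      rw [← LinearMap.comp_apply, ← LinearMap.lTensor_comp]
      have : (LinearMap.range B).subtype ∘ₗ B.rangeRestrict = r ∘ₗ A := rfl
      rw [this, LinearMap.lTensor_comp, LinearMap.comp_apply, hx2, map_zero])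
  have := congrArg ((LinearEquiv.ofInjective B hBi).symm.toLinearMap.lTensor F) key
  rw [map_zero, map_smul, ← LinearMap.comp_apply, ← LinearMap.lTensor_comp] at this
  have h3 : (LinearEquiv.ofInjective B hBi).symm.toLinearMap ∘ₗ B.rangeRestrict = LinearMap.id := by
    ext1 y
    exact (LinearEquiv.ofInjective B hBi).symm_apply_apply y
  rw [h3] at this
  simpa using this

/-- Injective target: killing Tor implies extension. -/
lemma extend_of_kills (ρ : Q →ₗ[R] N) (I : Type u) [AddCommGroup I] [Module R I]
    (hI : Module.Injective R I) (h : Kills s F ρ) (g : LinearMap.ker ρ →ₗ[R] (F →ₗ[R] I)) :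
    ∃ k : Q →ₗ[R] (F →ₗ[R] I), k ∘ₗ (LinearMap.ker ρ).subtype = s • g := by
  let T := (LinearMap.ker ρ).subtype.lTensor F
  let G : F ⊗[R] (LinearMap.ker ρ) →ₗ[R] I := TensorProduct.lift (s • g.flip)
  have hG : ∀ x, G x = TensorProduct.lift g.flip (s • x) := by
    intro x
    have : G = s • TensorProduct.lift g.flip := by
      apply TensorProduct.ext'; intro a b; simp [G]
    rw [this]; simp
  have hker : LinearMap.ker T ≤ LinearMap.ker G := by
    intro x hx
    rw [LinearMap.mem_ker, hG, h x hx, map_zero]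
  obtain ⟨k, hk⟩ := hI.out ((LinearMap.ker T).liftQ T le_rfl)
    (LinearMap.ker_eq_bot.1 (Submodule.ker_liftQ_eq_bot _ _ _ le_rfl))
    ((LinearMap.ker T).liftQ G hker)
  refine ⟨(TensorProduct.curry k).flip, ?_⟩
  ext a b
  have := hk (Submodule.Quotient.mk (b ⊗ₜ a))
  simpa [T, G] using this

lemma kills_of_extend (ρ : Q →ₗ[R] N) (I : Type u) [AddCommGroup I] [Module R I]
    (hI : ∀ (T : Type u) [AddCommGroup T] [Module R T] (t : T),
      (∀ φ : T →ₗ[R] I, φ t = 0) → t = 0)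
    (h : ∀ g : LinearMap.ker ρ →ₗ[R] (F →ₗ[R] I),
      ∃ k : Q →ₗ[R] (F →ₗ[R] I), k ∘ₗ (LinearMap.ker ρ).subtype = s • g) : Kills s F ρ := by
  intro x hx
  apply hI
  intro φ
  obtain ⟨k, hk⟩ := h (TensorProduct.curry φ).flip
  have : s • φ = TensorProduct.lift k.flip ∘ₗ (LinearMap.ker ρ).subtype.lTensor F := by
    apply TensorProduct.ext'
    intro a b
    have := LinearMap.congr_fun (LinearMap.congr_fun hk b) a
    simpa using this.symm
  rw [map_smul, ← LinearMap.smul_apply, this, LinearMap.comp_apply, hx, map_zero]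

lemma charModule_sep (T : Type u) [AddCommGroup T] [Module R T] (t : T)
    (h : ∀ φ : T →ₗ[R] CharacterModule R, φ t = 0) : t = 0 := by
  apply CharacterModule.eq_zero_of_character_apply
  intro c
  let φ : T →ₗ[R] CharacterModule R := CharacterModule.curry
    (CharacterModule.dual (TensorProduct.rid R T).toLinearMap c)
  have := DFunLike.congr_fun (h φ) (1 : R)
  have h2 : c (TensorProduct.rid R T (t ⊗ₜ (1 : R))) = 0 := this
  simpa using h2

lemma charModule_inj : Module.Injective R (CharacterModule R) :=
  Module.Flat.iff_characterModule_injective.1 inferInstance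

/-- elementary Tor criterion -/
lemma kills_iff {P1 P2 : Type u} [AddCommGroup P1] [Module R P1] [AddCommGroup P2] [Module R P2]
    (d2 : P2 →ₗ[R] P1) (d1 : P1 →ₗ[R] P) (π : P →ₗ[R] F)
    (h1 : Function.Exact d2 d1) (h0 : Function.Exact d1 π) :
    (∀ x : N ⊗[R] P1, d1.lTensor N x = 0 → ∃ y, d2.lTensor N y = s • x) ↔ Kills s N π := by
  let e : P1 →ₗ[R] LinearMap.ker π := d1.codRestrict _ fun x => h0.apply_apply_eq_zero x
  have he : Function.Surjective e := by
    rintro ⟨y, hy⟩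
    obtain ⟨x, hx⟩ := (h0 y).1 hy
    exact ⟨x, Subtype.ext hx⟩
  have hex : Function.Exact d2 e := by
    intro x
    rw [← h1 x]
    exact Subtype.ext_iff
  have hc : d1.lTensor N = (LinearMap.ker π).subtype.lTensor N ∘ₗ e.lTensor N := by
    rw [← LinearMap.lTensor_comp]; rfl
  have hT := lTensor_exact N hex he
  constructor
  · intro h y hy
    obtain ⟨x, rfl⟩ := LinearMap.lTensor_surjective N he y
    rw [← map_smul]
    exact (hT _).2 (h x (by rw [hc]; exact hy))
  · intro h x hx
    rw [hc] at hx
    refine (hT _).1 ?_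
    rw [map_smul]
    exact h _ hx

/-- elementary Ext criterion -/
lemma ext_iff {P1 P2 E : Type u} [AddCommGroup P1] [Module R P1] [AddCommGroup P2] [Module R P2]
    [AddCommGroup E] [Module R E]
    (d2 : P2 →ₗ[R] P1) (d1 : P1 →ₗ[R] P) (π : P →ₗ[R] F)
    (h1 : Function.Exact d2 d1) (h0 : Function.Exact d1 π) :
    (∀ x : P1 →ₗ[R] E, x ∘ₗ d2 = 0 → ∃ y : P →ₗ[R] E, y ∘ₗ d1 = s • x) ↔
      ∀ g : LinearMap.ker π →ₗ[R] E, ∃ k : P →ₗ[R] E, k ∘ₗ (LinearMap.ker π).subtype = s • g := by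
  let e : P1 →ₗ[R] LinearMap.ker π := d1.codRestrict _ fun x => h0.apply_apply_eq_zero x
  have he : Function.Surjective e := by
    rintro ⟨y, hy⟩
    obtain ⟨x, hx⟩ := (h0 y).1 hy
    exact ⟨x, Subtype.ext hx⟩
  have hex : Function.Exact d2 e := by
    intro x
    rw [← h1 x]
    exact Subtype.ext_iff
  constructor
  · intro h g
    obtain ⟨k, hk⟩ := h (g ∘ₗ e) (by
      ext x; simp [hex.apply_apply_eq_zero x])
    refine ⟨k, ?_⟩
    ext z
    obtain ⟨x, rfl⟩ := he z
    exact LinearMap.congr_fun hk x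
  · intro h x hx
    have hle : LinearMap.ker e ≤ LinearMap.ker x := by
      intro z hz
      obtain ⟨w, rfl⟩ := (hex z).1 hz
      exact LinearMap.congr_fun hx w
    let q := e.quotKerEquivOfSurjective he
    obtain ⟨k, hk⟩ := h (((LinearMap.ker e).liftQ x hle) ∘ₗ q.symm.toLinearMap)
    refine ⟨k, ?_⟩
    ext z
    have := LinearMap.congr_fun hk (e z)
    have h2 : q.symm (e z) = Submodule.Quotient.mk z := by
      rw [LinearEquiv.symm_apply_eq]; rfl
    simp [h2] at this
    exact this

end

section cat
variable {R : Type u} [CommRing R] {s : R}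

lemma killed_iso {A B : ModuleCat.{u} R} (e : A ≅ B) :
    (∀ x : A, s • x = 0) ↔ ∀ x : B, s • x = 0 := by
  constructor
  · intro h x
    have := congrArg e.hom (h (e.inv x))
    rwa [map_zero, map_smul, Iso.inv_hom_id_apply] at this
  · intro h x
    have := congrArg e.inv (h (e.hom x))
    rwa [map_zero, map_smul, Iso.hom_inv_id_apply] at this

lemma homology_iff (S : ShortComplex (ModuleCat.{u} R)) :
    (∀ x : S.homology, s • x = 0) ↔ ∀ x : S.X₂, S.g x = 0 → ∃ y, S.f y = s • x := by
  refine (killed_iso S.moduleCatHomologyIso).trans ?_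
  constructor
  · intro h x hx
    have := h (Submodule.Quotient.mk (⟨x, hx⟩ : LinearMap.ker S.g.hom))
    obtain ⟨y, hy⟩ := (Submodule.Quotient.mk_eq_zero _).1 this
    exact ⟨y, congrArg Subtype.val hy⟩
  · intro h x
    obtain ⟨⟨x, hx⟩, rfl⟩ := Submodule.Quotient.mk_surjective _ x
    obtain ⟨y, hy⟩ := h x hx
    exact (Submodule.Quotient.mk_eq_zero _).2 ⟨y, Subtype.ext hy⟩

lemma tor_iff (N F : ModuleCat.{u} R) (P : ProjectiveResolution F) :
    (∀ x : ((Tor (ModuleCat.{u} R) 1).obj N).obj F, s • x = 0) ↔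
      ∀ x : N ⊗[R] P.complex.X 1, (P.complex.d 1 0).hom.lTensor N x = 0 →
        ∃ y, (P.complex.d 2 1).hom.lTensor N y = s • x := by
  refine (killed_iso (P.isoLeftDerivedObj _ 1)).trans ?_
  refine (killed_iso (HomologicalComplex.homologyIsoSc' _ 2 1 0 (by simp) (by simp))).trans ?_
  refine (homology_iff _).trans ?_
  rfl

lemma extcat_iff (N E : ModuleCat.{u} R) (P : ProjectiveResolution N) :
    (∀ x : ((Ext R (ModuleCat.{u} R) 1).obj (Opposite.op N)).obj E, s • x = 0) ↔
      ∀ x : P.complex.X 1 →ₗ[R] E, x ∘ₗ (P.complex.d 2 1).hom = 0 →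
        ∃ y : P.complex.X 0 →ₗ[R] E, y ∘ₗ (P.complex.d 1 0).hom = s • x := by
  refine (killed_iso (P.isoExt 1 E)).trans ?_
  refine (killed_iso (HomologicalComplex.homologyIsoSc' _ 0 1 2 (by simp) (by simp))).trans ?_
  refine (homology_iff _).trans ?_
  constructor
  · intro h x hx
    obtain ⟨y, hy⟩ := h (ModuleCat.ofHom x) (ModuleCat.hom_ext hx)
    exact ⟨ModuleCat.Hom.hom (R := R) y, congrArg (ModuleCat.Hom.hom (R := R)) hy⟩
  · intro h x hx
    obtain ⟨y, hy⟩ := h (ModuleCat.Hom.hom (R := R) x) (congrArg (ModuleCat.Hom.hom (R := R)) hx)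
    exact ⟨ModuleCat.ofHom y, ModuleCat.hom_ext hy⟩

/-- The augmentation of a projective resolution. -/
def aug {N : ModuleCat.{u} R} (P : ProjectiveResolution N) : P.complex.X 0 →ₗ[R] N :=
  ModuleCat.Hom.hom (P.π.f 0)

lemma res_exact1 {N : ModuleCat.{u} R} (P : ProjectiveResolution N) :
    Function.Exact (P.complex.d 2 1).hom (P.complex.d 1 0).hom :=
  (ShortComplex.ShortExact.moduleCat_exact_iff_function_exact _).1 (P.exact_succ 0)

lemma res_exact0 {N : ModuleCat.{u} R} (P : ProjectiveResolution N) :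
    Function.Exact (P.complex.d 1 0).hom
      (aug P) :=
  (ShortComplex.ShortExact.moduleCat_exact_iff_function_exact _).1 P.exact₀

lemma res_surj {N : ModuleCat.{u} R} (P : ProjectiveResolution N) :
    Function.Surjective (aug P) :=
  (ModuleCat.epi_iff_surjective (P.π.f 0)).1 inferInstance

lemma res_flat {N : ModuleCat.{u} R} (P : ProjectiveResolution N) :
    Module.Flat R (P.complex.X 0) := by
  have : Module.Projective R (P.complex.X 0) :=
    (IsProjective.iff_projective _).2 (P.projective 0)
  infer_instance

/-- `Tor` is killed by `s` iff the kernel from any flat presentation of `N` is. -/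
lemma tor_iff_kills (N F Q : Type u) [AddCommGroup N] [Module R N] [AddCommGroup F] [Module R F]
    [AddCommGroup Q] [Module R Q] [Module.Flat R Q] (ρ : Q →ₗ[R] N)
    (hρ : Function.Surjective ρ) :
    (∀ x : ((Tor (ModuleCat.{u} R) 1).obj (ModuleCat.of R N)).obj (ModuleCat.of R F),
      s • x = 0) ↔ Kills s F ρ := by
  let P := ProjectiveResolution.of (ModuleCat.of R F)
  have := res_flat P
  rw [tor_iff _ _ P]
  refine (kills_iff _ _ _ (res_exact1 P) (res_exact0 P)).trans ?_
  exact ⟨balance _ _ (res_surj P) hρ, balance _ _ hρ (res_surj P)⟩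

lemma ext_killed_of_tor (N F I : Type u) [AddCommGroup N] [Module R N] [AddCommGroup F]
    [Module R F] [AddCommGroup I] [Module R I] (hI : Module.Injective R I)
    (h : ∀ x : ((Tor (ModuleCat.{u} R) 1).obj (ModuleCat.of R N)).obj (ModuleCat.of R F),
      s • x = 0) :
    ∀ x : ((Ext R (ModuleCat.{u} R) 1).obj (Opposite.op (ModuleCat.of R N))).obj
      (ModuleCat.of R (F →ₗ[R] I)), s • x = 0 := by
  let P := ProjectiveResolution.of (ModuleCat.of R N)
  have := res_flat P
  rw [extcat_iff _ _ P]
  refine (ext_iff _ _ _ (res_exact1 P) (res_exact0 P)).2 ?_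
  exact extend_of_kills _ I hI ((tor_iff_kills _ _ _ _ (res_surj P)).1 h)

lemma tor_killed_of_ext (N F I : Type u) [AddCommGroup N] [Module R N] [AddCommGroup F]
    [Module R F] [AddCommGroup I] [Module R I]
    (hI : ∀ (T : Type u) [AddCommGroup T] [Module R T] (t : T),
      (∀ φ : T →ₗ[R] I, φ t = 0) → t = 0)
    (h : ∀ x : ((Ext R (ModuleCat.{u} R) 1).obj (Opposite.op (ModuleCat.of R N))).obj
      (ModuleCat.of R (F →ₗ[R] I)), s • x = 0) :
    ∀ x : ((Tor (ModuleCat.{u} R) 1).obj (ModuleCat.of R N)).obj (ModuleCat.of R F),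
      s • x = 0 := by
  let P := ProjectiveResolution.of (ModuleCat.of R N)
  have := res_flat P
  rw [extcat_iff _ _ P] at h
  exact (tor_iff_kills _ _ _ _ (res_surj P)).2
    (kills_of_extend _ I hI ((ext_iff _ _ _ (res_exact1 P) (res_exact0 P)).1 h))

lemma almostFlat_of_char (m : Ideal R) (F : Type u) [AddCommGroup F] [Module R F]
    (h : IsAlmostAbsolutelyPure m (F →ₗ[R] CharacterModule R)) : IsAlmostFlat m F := by
  intro N _ _ s hs
  rw [tor_iff_kills N F (N →₀ R) (Finsupp.linearCombination R id)
    (Finsupp.linearCombination_id_surjective R N)]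
  refine kills_of_fg ?_ N _
  intro κ _ L hL
  have hfp : Module.FinitePresentation R ((κ →₀ R) ⧸ L) :=
    Module.finitePresentation_of_surjective L.mkQ (Submodule.mkQ_surjective L)
      (by rwa [Submodule.ker_mkQ])
  have h1 := tor_killed_of_ext _ F _ charModule_sep (h _ hfp s hs)
  have h2 := (tor_iff_kills _ _ _ L.mkQ (Submodule.mkQ_surjective L)).1 h1
  unfold Kills at h2
  rwa [Submodule.ker_mkQ] at h2

end cat
end AFlat

/-- `F` is almost flat iff `Hom_R(F, I)` is almost absolutely pure
for every injective `I`, iff `Hom_R(F, E)` is almost absolutely pure for every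
injective cogenerator `E`. -/
theorem almostFlat_iff_hom_almostAbsolutelyPure
    {R : Type u} [CommRing R] (m : Ideal R) (hm : m * m = m)
    (F : Type u) [AddCommGroup F] [Module R F] :
    -- (1) ↔ (2)
    ((IsAlmostFlat m F ↔
      (∀ (I : Type u) [AddCommGroup I] [Module R I], Module.Injective R I →
        IsAlmostAbsolutelyPure m (F →ₗ[R] I))) ∧
    -- (1) ↔ (3)
    (IsAlmostFlat m F ↔
      (∀ (E : Type u) [AddCommGroup E] [Module R E], Module.Injective R E →
        (∀ (T : Type u) [AddCommGroup T] [Module R T],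
          (∀ φ : T →ₗ[R] E, φ = 0) → Subsingleton T) →
        IsAlmostAbsolutelyPure m (F →ₗ[R] E)))) := by
  have h12 : IsAlmostFlat m F → ∀ (I : Type u) [AddCommGroup I] [Module R I],
      Module.Injective R I → IsAlmostAbsolutelyPure m (F →ₗ[R] I) := by
    intro h I _ _ hI N _ _ _ s hs
    exact AFlat.ext_killed_of_tor N F I hI (h N s hs)
  refine ⟨⟨h12, fun h => ?_⟩, ⟨fun h E _ _ hE _ => h12 h E hE, fun h => ?_⟩⟩
  · exact AFlat.almostFlat_of_char m F (h _ AFlat.charModule_inj)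
  · refine AFlat.almostFlat_of_char m F (h _ AFlat.charModule_inj ?_)
    intro T _ _ hT
    exact ⟨fun a b => sub_eq_zero.1 (AFlat.charModule_sep (R := R) T (a - b)
      fun φ => by rw [hT φ]; rfl)⟩
end
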